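/- arXiv:1109.5472 — 7 statements merged into one kernel-verified Lean document; each statement's English description precedes it below -/
import Mathlib

section
/- Let n ≥ 1, let A be an n×n positive semidefinite complex matrix, and let η and η' be partitions of n with η ⊵ η' in the dominance order. Then (n choose η)⁻¹ · Re ∫_{U(n)} d_{[η]}(u A u*) du ≥ (n choose η')⁻¹ · Re ∫_{U(n)} d_{[η']}(u A u*) du, where the integrals are over the unitary group U(n) with respect to its Haar probability measure. (Averaged Merris–Watkins monotonicity conjecture, Theorem 7.) -/
open MeasureTheory Matrix
open scoped ComplexOrder

noncomputable instance {n : ℕ} : MeasurableSpace (Matrix.unitaryGroup (Fin n) ℂ) := borel _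
instance {n : ℕ} : BorelSpace (Matrix.unitaryGroup (Fin n) ℂ) := ⟨rfl⟩

/-- conjugation of `A` by the unitary `u` : `u * A * u*` -/
noncomputable def conjU {n : ℕ} (A : Matrix (Fin n) (Fin n) ℂ) (u : Matrix.unitaryGroup (Fin n) ℂ) :
    Matrix (Fin n) (Fin n) ℂ :=
  (u : Matrix (Fin n) (Fin n) ℂ) * A * star (u : Matrix (Fin n) (Fin n) ℂ)

/-- the induced character `[η]` of the symmetric group -/
noncomputable def inducedChar (n : ℕ) (η : Fin n → ℕ) (σ : Equiv.Perm (Fin n)) : ℕ :=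
  Nat.card {f : Fin n → Fin n // (∀ j, Nat.card {i // f i = j} = η j) ∧ f ∘ σ = f}

/-- generalized matrix function attached to the induced character `[η]` -/
noncomputable def dInduced {n : ℕ} (η : Fin n → ℕ) (M : Matrix (Fin n) (Fin n) ℂ) : ℂ :=
  ∑ σ : Equiv.Perm (Fin n), (inducedChar n η σ : ℂ) * ∏ i, M i (σ i)

/-- `η` is a partition of `n` with at most `n` parts -/
def IsPartition (n : ℕ) (η : Fin n → ℕ) : Prop := Antitone η ∧ ∑ i, η i = n

/-- dominance order on partitions -/
def Dominates {n : ℕ} (η η' : Fin n → ℕ) : Prop :=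
  ∀ j : Fin n, ∑ i ∈ Finset.Iic j, η' i ≤ ∑ i ∈ Finset.Iic j, η i

/-!
Let `X = u A u*` with `u` Haar distributed, and let `T` be the expectation of the Kronecker power
`X^{⊗n}`, a matrix indexed by multi-indices. By invariance of the measure, `T` commutes with
`V^{⊗n}` for every unitary `V`; diagonal unitaries show that `T` preserves contents, so it commutes
with `D^{⊗n}` for every diagonal `D`, and by the singular value decomposition with `B^{⊗n}` for
every matrix `B`. Taking for `B` the 0-1 matrix of a map `f` shows that the entries `T id σ` with
`f ∘ σ = f` sum to `T f f = E ∏ j, X j j ^ η j`, where `η` is the content of `f`. As there are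
`(n choose η)` such `f`, the normalised average of `d_[η]` is the diagonal moment
`E ∏ j, X j j ^ η j`. This moment is invariant under permutations of `η`, and it is convex in `η`
because the entries `X j j` are nonnegative. Since dominance puts `η'` in the convex hull of the
permutations of `η` (Rado), the inequality follows.
-/

open Finset Unitary

section Content

variable {ι m : Type*} [Fintype ι] [DecidableEq m]

/-- The content of a multi-index `f`: how often each value `j` is taken. The induced character
`[η]` counts the multi-indices of content `η` that a permutation fixes. -/
def content (f : ι → m) (j : m) : ℕ := #{a | f a = j}

lemma content_le_card (f : ι → m) (j : m) : content f j ≤ Fintype.card ι :=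
  card_filter_le _ _

variable [Fintype m]

lemma prod_comp_eq_prod_pow_content {M : Type*} [CommMonoid M] (f : ι → m) (x : m → M) :
    ∏ a, x (f a) = ∏ j, x j ^ content f j := by
  rw [← Finset.prod_fiberwise' univ f x]
  simp only [prod_const, content]

lemma bijective_of_content_eq_content_id {g : m → m} (h : content g = content id) :
    Function.Bijective g := by
  refine Finite.surjective_iff_bijective.1 fun j ↦ ?_
  have hj : 0 < content g j := by rw [h]; exact Finset.card_pos.2 ⟨j, by simp⟩
  obtain ⟨i, hi⟩ := Finset.card_pos.1 hj
  exact ⟨i, (Finset.mem_filter.1 hi).2⟩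

lemma card_content_eq_multinomial [DecidableEq ι] {η : m → ℕ} (hη : ∑ j, η j = Fintype.card ι) :
    #{f : ι → m | content f = η} = Nat.multinomial univ η := by
  let e : (m →₀ ℕ) ≃ (m → ℕ) := Finsupp.equivFunOnFinite
  have expand : (∑ j, MvPolynomial.X j : MvPolynomial m ℕ) ^ Fintype.card ι =
      ∑ f : ι → m, MvPolynomial.monomial (e.symm (content f)) 1 := by
    rw [← Finset.card_univ, ← Finset.prod_const, Fintype.prod_sum]
    refine Finset.sum_congr rfl fun f _ ↦ ?_
    rw [prod_comp_eq_prod_pow_content f, MvPolynomial.monomial_eq,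
      Finsupp.prod_fintype _ _ (by simp)]
    simp [e]
  have coeff_eq := MvPolynomial.coeff_sum_X_pow_of_fintype (R := ℕ) (e.symm η) (Fintype.card ι)
  rw [expand, Finsupp.sum_fintype _ _ (by simp),
    Finsupp.multinomial_eq_of_support_subset (Finset.subset_univ _)] at coeff_eq
  simpa [MvPolynomial.coeff_sum, MvPolynomial.coeff_monomial, hη, e] using coeff_eq

end Content

section Majorization

lemma mul_sum_le_sum_mul_of_antitone {R : Type*} [CommRing R] [LinearOrder R]
    [IsStrictOrderedRing R] {n : ℕ} {v d : Fin n → R} {c : R} (hv : Antitone v)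
    (hc : ∀ i, c ≤ v i) (hd : ∀ j, 0 ≤ ∑ i ∈ Iic j, d i) :
    c * ∑ i, d i ≤ ∑ i, v i * d i := by
  induction n generalizing c with
  | zero => simp
  | succ n ih =>
    have init : v (Fin.last n) * ∑ i : Fin n, d i.castSucc ≤
        ∑ i : Fin n, v i.castSucc * d i.castSucc := by
      refine ih (fun i j hij ↦ hv (Fin.castSucc_le_castSucc_iff.2 hij))
        (fun i ↦ hv (Fin.le_last _)) fun j ↦ ?_
      simpa [← Fin.map_castSuccEmb_Iic] using hd j.castSucc
    have total : 0 ≤ ∑ i, d i := by simpa [← Fin.top_eq_last] using hd (Fin.last n)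
    calc c * ∑ i, d i ≤ v (Fin.last n) * ∑ i, d i := by gcongr; exact hc _
      _ = v (Fin.last n) * ∑ i : Fin n, d i.castSucc + v (Fin.last n) * d (Fin.last n) := by
        rw [Fin.sum_univ_castSucc, mul_add]
      _ ≤ ∑ i, v i * d i := by rw [Fin.sum_univ_castSucc]; gcongr

lemma sum_mul_le_sum_mul_of_antitone {R : Type*} [CommRing R] [LinearOrder R]
    [IsStrictOrderedRing R] {n : ℕ} {v x y : Fin n → R} (hv : Antitone v)
    (hsum : ∑ i, y i = ∑ i, x i) (hdom : ∀ j, ∑ i ∈ Iic j, y i ≤ ∑ i ∈ Iic j, x i) :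
    ∑ i, v i * y i ≤ ∑ i, v i * x i := by
  obtain ⟨c, hc⟩ := (Set.finite_range v).bddBelow
  have := mul_sum_le_sum_mul_of_antitone (d := x - y) hv (fun i ↦ hc ⟨i, rfl⟩)
    fun j ↦ by simpa using hdom j
  simpa [mul_sub, hsum] using this

/-- A linear functional separating `y` from the permutations of `x` would, after sorting its
coefficients and using rearrangement and summation by parts, contradict dominance. -/
lemma mem_convexHull_range_comp_perm_of_sum_Iic_le {n : ℕ} {x y : Fin n → ℝ} (hy : Antitone y)
    (hsum : ∑ i, y i = ∑ i, x i) (hdom : ∀ j, ∑ i ∈ Iic j, y i ≤ ∑ i ∈ Iic j, x i) :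
    y ∈ convexHull ℝ (Set.range fun π : Equiv.Perm (Fin n) ↦ x ∘ π) := by
  by_contra hmem
  obtain ⟨f, c, hlt, hgt⟩ := geometric_hahn_banach_closed_point (convex_convexHull ℝ _)
    ((Set.finite_range _).isClosed_convexHull ℝ) hmem
  let w : Fin n → ℝ := fun i ↦ f (Pi.single i 1)
  have f_apply (z : Fin n → ℝ) : f z = ∑ i, w i * z i := by
    conv_lhs => rw [pi_eq_sum_univ' z]
    simp [w, mul_comm, map_sum]
  let τ : Equiv.Perm (Fin n) := Tuple.sort (-w)
  have hw : Antitone (w ∘ τ) := fun i j hij ↦ neg_le_neg_iff.1 (Tuple.monotone_sort (-w) hij)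
  have key : f y ≤ f (x ∘ τ.symm) :=
    calc f y = ∑ i, w i * y i := f_apply y
      _ ≤ ∑ i, w (τ i) * y i := by
        rw [← Equiv.sum_comp τ]
        exact (hw.monovary hy).sum_mul_comp_perm_le_sum_mul (σ := τ)
      _ ≤ ∑ i, w (τ i) * x i := sum_mul_le_sum_mul_of_antitone hw hsum hdom
      _ = f (x ∘ τ.symm) := by
        rw [f_apply, ← Equiv.sum_comp τ fun i ↦ w i * (x ∘ τ.symm) i]
        simp
  exact (key.trans_lt (hlt _ (subset_convexHull ℝ _ ⟨τ.symm, rfl⟩))).not_gt hgt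

lemma le_of_convexOn_of_perm_invariant {n : ℕ} {s : Set (Fin n → ℝ)} {F : (Fin n → ℝ) → ℝ}
    {x y : Fin n → ℝ} (hF : ConvexOn ℝ s F) (hs : ∀ π : Equiv.Perm (Fin n), x ∘ π ∈ s)
    (hsymm : ∀ π : Equiv.Perm (Fin n), F (x ∘ π) = F x) (hy : Antitone y)
    (hsum : ∑ i, y i = ∑ i, x i) (hdom : ∀ j, ∑ i ∈ Iic j, y i ≤ ∑ i ∈ Iic j, x i) :
    F y ≤ F x := by
  obtain ⟨_, ⟨π, rfl⟩, hπ⟩ := hF.exists_ge_of_mem_convexHull (Set.range_subset_iff.2 hs)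
    (mem_convexHull_range_comp_perm_of_sum_Iic_le hy hsum hdom)
  exact hπ.trans_eq (hsymm π)

end Majorization

section Convexity

lemma convexOn_prod_rpow {ι : Type*} [Fintype ι] {x : ι → ℝ} (hx : 0 ≤ x) :
    ConvexOn ℝ (Set.Ici 0) fun a : ι → ℝ ↦ ∏ i, x i ^ a i := by
  refine ⟨convex_Ici 0, fun a ha b hb s t hs ht hst ↦ ?_⟩
  have hrpow (c : ι → ℝ) (i : ι) : 0 ≤ x i ^ c i := Real.rpow_nonneg (hx i) _
  calc ∏ i, x i ^ (s • a + t • b) i = (∏ i, x i ^ a i) ^ s * (∏ i, x i ^ b i) ^ t := by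
        rw [← Real.finsetProd_rpow _ _ fun i _ ↦ hrpow a i,
          ← Real.finsetProd_rpow _ _ fun i _ ↦ hrpow b i, ← Finset.prod_mul_distrib]
        refine Finset.prod_congr rfl fun i _ ↦ ?_
        rw [← Real.rpow_mul (hx i), ← Real.rpow_mul (hx i), mul_comm (a i), mul_comm (b i)]
        exact Real.rpow_add_of_nonneg (hx i) (mul_nonneg hs (ha i)) (mul_nonneg ht (hb i))
    _ ≤ s • ∏ i, x i ^ a i + t • ∏ i, x i ^ b i :=
        Real.geom_mean_le_arith_mean2_weighted hs ht (Finset.prod_nonneg fun i _ ↦ hrpow a i)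
          (Finset.prod_nonneg fun i _ ↦ hrpow b i) hst

lemma convexOn_integral {Ω E : Type*} [MeasurableSpace Ω] {μ : Measure Ω} [AddCommMonoid E]
    [Module ℝ E] {s : Set E} {F : Ω → E → ℝ} (hs : Convex ℝ s) (hF : ∀ ω, ConvexOn ℝ s (F ω))
    (hint : ∀ x ∈ s, Integrable (fun ω ↦ F ω x) μ) :
    ConvexOn ℝ s fun x ↦ ∫ ω, F ω x ∂μ := by
  refine ⟨hs, fun x hx y hy a b ha hb hab ↦ ?_⟩
  have hax : Integrable (fun ω ↦ a • F ω x) μ := (hint x hx).smul a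
  have hby : Integrable (fun ω ↦ b • F ω y) μ := (hint y hy).smul b
  calc ∫ ω, F ω (a • x + b • y) ∂μ ≤ ∫ ω, a • F ω x + b • F ω y ∂μ :=
        integral_mono (hint _ (hs hx hy ha hb hab)) (hax.add hby)
          fun ω ↦ (hF ω).2 hx hy ha hb hab
    _ = a • ∫ ω, F ω x ∂μ + b • ∫ ω, F ω y ∂μ := by
        rw [integral_add hax hby, integral_smul, integral_smul]

end Convexity

section KroneckerPower

variable {m n l R : Type*} [CommSemiring R]

/-- The Kronecker power `M^{⊗ι}` of a matrix `M`, whose rows and columns are indexed by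
multi-indices. -/
def kroneckerPower (ι : Type*) [Fintype ι] (M : Matrix m n R) : Matrix (ι → m) (ι → n) R :=
  of fun f g ↦ ∏ a, M (f a) (g a)

variable {ι : Type*} [Fintype ι]

@[simp]
lemma kroneckerPower_apply (M : Matrix m n R) (f : ι → m) (g : ι → n) :
    kroneckerPower ι M f g = ∏ a, M (f a) (g a) := rfl

lemma kroneckerPower_mul [DecidableEq ι] [Fintype n] (M : Matrix m n R) (N : Matrix n l R) :
    kroneckerPower ι (M * N) = kroneckerPower ι M * kroneckerPower ι N := by
  ext f g
  simp only [kroneckerPower_apply, mul_apply, Fintype.prod_sum, Finset.prod_mul_distrib]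

variable [DecidableEq m]

lemma kroneckerPower_diagonal (d : m → R) :
    kroneckerPower ι (diagonal d) = diagonal fun f ↦ ∏ a, d (f a) := by
  ext f g
  simp [diagonal_apply, Finset.prod_ite_zero, funext_iff]

lemma kroneckerPower_one_submatrix (φ : n → m) (f : ι → n) (g : ι → m) :
    kroneckerPower ι ((1 : Matrix m m R).submatrix φ id) f g = if φ ∘ f = g then 1 else 0 := by
  simp [one_apply, Finset.prod_ite_zero, funext_iff]

end KroneckerPower

section SVD

variable {m 𝕜 : Type*} [Fintype m] [DecidableEq m] [RCLike 𝕜]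

lemma exists_eq_diagonal_mul_unitary {B : Matrix m m 𝕜} (hB : (B * Bᴴ).IsDiag) :
    ∃ d : m → 𝕜, ∃ V ∈ unitaryGroup m 𝕜, B = diagonal d * V := by
  let b (i : m) : EuclideanSpace 𝕜 m := WithLp.toLp 2 (B i)
  have hb {i j : m} (hij : i ≠ j) : inner 𝕜 (b i) (b j) = 0 := by
    rw [EuclideanSpace.inner_eq_star_dotProduct]
    exact hB hij.symm
  let s : Set m := {i | b i ≠ 0}
  have horth : Orthonormal 𝕜 (s.domRestrict fun i ↦ (‖b i‖⁻¹ : 𝕜) • b i) :=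
    ⟨fun i ↦ norm_smul_inv_norm i.2, fun i j hij ↦ by
      simp [inner_smul_left, inner_smul_right, hb (Subtype.coe_ne_coe.2 hij)]⟩
  obtain ⟨e, he⟩ := horth.exists_orthonormalBasis_extension_of_card_eq (by simp)
  refine ⟨fun i ↦ ‖b i‖, ((EuclideanSpace.basisFun m 𝕜).toBasis.toMatrix e)ᵀ,
    transpose_mem_unitaryGroup_iff.2
      ((EuclideanSpace.basisFun m 𝕜).toMatrix_orthonormalBasis_mem_unitary e), ?_⟩
  ext i k
  have hi : b i = (‖b i‖ : 𝕜) • e i := by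
    by_cases h : b i = 0
    · simp [h]
    · rw [he i h, smul_inv_smul₀ (by simpa using h)]
  simpa [b, Module.Basis.toMatrix_apply, RCLike.real_smul_eq_coe_mul]
    using congrArg (fun v ↦ v k) hi

lemma exists_eq_unitary_mul_diagonal_mul_unitary (B : Matrix m m 𝕜) :
    ∃ U ∈ unitaryGroup m 𝕜, ∃ d : m → 𝕜, ∃ V ∈ unitaryGroup m 𝕜, B = U * diagonal d * V := by
  have hH : (B * Bᴴ).IsHermitian := isHermitian_mul_conjTranspose_self B
  let U : unitaryGroup m 𝕜 := hH.eigenvectorUnitary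
  have hdiag : ((star U : Matrix m m 𝕜) * B * ((star U : Matrix m m 𝕜) * B)ᴴ).IsDiag := by
    have h := hH.conjStarAlgAut_star_eigenvectorUnitary
    rw [conjStarAlgAut_star_apply] at h
    rw [conjTranspose_mul, star_eq_conjTranspose, conjTranspose_conjTranspose, Matrix.mul_assoc,
      ← Matrix.mul_assoc B, ← Matrix.mul_assoc, ← star_eq_conjTranspose]
    exact h ▸ isDiag_diagonal _
  obtain ⟨d, V, hV, hd⟩ := exists_eq_diagonal_mul_unitary hdiag
  refine ⟨U, U.2, d, V, hV, ?_⟩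
  rw [Matrix.mul_assoc, ← hd, ← Matrix.mul_assoc, mem_unitaryGroup_iff.1 U.2, Matrix.one_mul]

end SVD

section Equivariant

variable {ι m : Type*} [Fintype ι] [DecidableEq ι] [Fintype m] [DecidableEq m]

/-- `T` commutes with the diagonal action of the unitary group on tensors. This is what averaging
`(u A u*)^{⊗ι}` over the unitary group produces, see `isUnitarilyEquivariant_twirl`. -/
def IsUnitarilyEquivariant (T : Matrix (ι → m) (ι → m) ℂ) : Prop :=
  ∀ V ∈ unitaryGroup m ℂ, Commute (kroneckerPower ι V) T

namespace IsUnitarilyEquivariant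

variable {T : Matrix (ι → m) (ι → m) ℂ} (hT : IsUnitarilyEquivariant T)

include hT

/-- Diagonal unitaries act on the tensors of a given content by a character of the torus, and
distinct contents have distinct characters. -/
lemma apply_eq_zero_of_content_ne {f g : ι → m} (hfg : content f ≠ content g) : T f g = 0 := by
  obtain ⟨j, hj⟩ := Function.ne_iff.1 hfg
  let N := Fintype.card ι + 1
  have hN : N ≠ 0 := Nat.succ_ne_zero _
  let z : ℂ := Complex.exp (2 * Real.pi * Complex.I / N)
  have hz : IsPrimitiveRoot z N := Complex.isPrimitiveRoot_exp N hN
  let d : m → ℂ := Pi.mulSingle j z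
  have hd : diagonal d ∈ unitaryGroup m ℂ := by
    have hz' : z * starRingEnd ℂ z = 1 := by rw [Complex.mul_conj', hz.norm'_eq_one hN]; simp
    rw [mem_unitaryGroup_iff, star_eq_conjTranspose, diagonal_conjTranspose,
      diagonal_mul_diagonal, ← diagonal_one]
    congr 1
    ext i
    by_cases hi : i = j <;> simp [d, hi, hz']
  have weight (h : ι → m) : ∏ a, d (h a) = z ^ content h j := by
    rw [prod_comp_eq_prod_pow_content, Finset.prod_eq_single j] <;> simp +contextual [d]
  have hcomm : z ^ content f j * T f g = T f g * z ^ content g j := by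
    have h := congrFun₂ (hT _ hd).eq f g
    rwa [kroneckerPower_diagonal, diagonal_mul, mul_diagonal, weight, weight] at h
  have hne : z ^ content f j ≠ z ^ content g j := fun h ↦
    hj (hz.pow_inj (Nat.lt_succ_of_le (content_le_card f j))
      (Nat.lt_succ_of_le (content_le_card g j)) h)
  rw [mul_comm, ← sub_eq_zero, ← mul_sub] at hcomm
  exact (mul_eq_zero.1 hcomm).resolve_right (sub_ne_zero.2 hne)

lemma commute_diagonal (d : m → ℂ) : Commute (kroneckerPower ι (diagonal d)) T := by
  ext f g
  rw [kroneckerPower_diagonal, diagonal_mul, mul_diagonal, mul_comm]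
  by_cases h : content f = content g
  · rw [prod_comp_eq_prod_pow_content, prod_comp_eq_prod_pow_content, h]
  · rw [hT.apply_eq_zero_of_content_ne h, zero_mul, zero_mul]

lemma commute_kroneckerPower (B : Matrix m m ℂ) : Commute (kroneckerPower ι B) T := by
  obtain ⟨U, hU, d, V, hV, rfl⟩ := exists_eq_unitary_mul_diagonal_mul_unitary B
  rw [kroneckerPower_mul, kroneckerPower_mul]
  exact ((hT U hU).mul_left (hT.commute_diagonal d)).mul_left (hT V hV)

end IsUnitarilyEquivariant

variable {T : Matrix (m → m) (m → m) ℂ} (hT : IsUnitarilyEquivariant T)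

include hT

/-- Compare the `(id, f)` entries on both sides of the commutation of `T` with `B^{⊗m}`, where `B`
is the matrix of the map `f`. -/
lemma IsUnitarilyEquivariant.sum_apply_id_eq_apply_self (f : m → m) :
    ∑ g : m → m with f ∘ g = f, T id g = T f f := by
  have h := congrFun₂ (hT.commute_kroneckerPower ((1 : Matrix m m ℂ).submatrix f id)).eq id f
  simpa [mul_apply, kroneckerPower_one_submatrix, Finset.sum_filter, -kroneckerPower_apply]
    using h.symm

lemma IsUnitarilyEquivariant.sum_perm_apply_id_eq_apply_self (f : m → m) :
    ∑ σ ∈ {σ : Equiv.Perm m | f ∘ σ = f}, T id σ = T f f := by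
  rw [← hT.sum_apply_id_eq_apply_self f]
  refine Finset.sum_of_injOn (fun σ : Equiv.Perm m ↦ ⇑σ) DFunLike.coe_injective.injOn
    (fun σ hσ ↦ by simpa using hσ) (fun g hg hne ↦ ?_) fun _ _ ↦ rfl
  refine hT.apply_eq_zero_of_content_ne fun hc ↦ hne ?_
  exact ⟨Equiv.ofBijective g (bijective_of_content_eq_content_id hc.symm), by simpa using hg, rfl⟩

end Equivariant

section Twirl

variable {m : Type*} [Fintype m] [DecidableEq m]

instance compactSpace_unitaryGroup : CompactSpace (unitaryGroup m ℂ) := by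
  let K : Set (Matrix m m ℂ) := Set.univ.pi fun _ ↦ Set.univ.pi fun _ ↦ Metric.closedBall 0 1
  have hK : IsCompact K :=
    isCompact_univ_pi fun _ ↦ isCompact_univ_pi fun _ ↦ isCompact_closedBall 0 1
  have hsub : (unitaryGroup m ℂ : Set (Matrix m m ℂ)) ⊆ K := fun U hU i _ j _ ↦
    mem_closedBall_zero_iff.2 (entry_norm_bound_of_unitary hU i j)
  exact isCompact_iff_compactSpace.1 (hK.of_isClosed_subset isClosed_unitary hsub)

lemma continuous_conjStarAlgAut_apply (A : Matrix m m ℂ) (i j : m) :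
    Continuous fun u : unitaryGroup m ℂ ↦ conjStarAlgAut ℂ _ u A i j := by
  have h : Continuous fun u : unitaryGroup m ℂ ↦ (u : Matrix m m ℂ) * A * star (u : Matrix m m ℂ) :=
    (continuous_subtype_val.mul continuous_const).mul continuous_subtype_val.star
  exact h.matrix_elem i j

variable [MeasurableSpace (unitaryGroup m ℂ)] [BorelSpace (unitaryGroup m ℂ)]
  (μ : Measure (unitaryGroup m ℂ)) [IsFiniteMeasure μ]
  (A : Matrix m m ℂ) {ι : Type*} [Fintype ι]

lemma integrable_kroneckerPower_conj (f g : ι → m) :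
    Integrable (fun u ↦ kroneckerPower ι (conjStarAlgAut ℂ _ u A) f g) μ :=
  (continuous_finsetProd _ fun a _ ↦ continuous_conjStarAlgAut_apply A (f a)
    (g a)).integrable_of_hasCompactSupport (.of_compactSpace _)

/-- The twirl of `A^{⊗ι}`: the average of `(u A u*)^{⊗ι}` over the unitary group. -/
noncomputable def twirl (ι : Type*) [Fintype ι] : Matrix (ι → m) (ι → m) ℂ :=
  of fun f g ↦ ∫ u, kroneckerPower ι (conjStarAlgAut ℂ _ u A) f g ∂μ

lemma mul_twirl_apply [DecidableEq ι] (C : Matrix (ι → m) (ι → m) ℂ) (f g : ι → m) :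
    (C * twirl μ A ι) f g = ∫ u, (C * kroneckerPower ι (conjStarAlgAut ℂ _ u A)) f g ∂μ := by
  simp only [mul_apply, twirl, of_apply]
  rw [integral_finsetSum _ fun h _ ↦ (integrable_kroneckerPower_conj μ A h g).const_mul _]
  simp only [integral_const_mul]

lemma twirl_mul_apply [DecidableEq ι] (C : Matrix (ι → m) (ι → m) ℂ) (f g : ι → m) :
    (twirl μ A ι * C) f g = ∫ u, (kroneckerPower ι (conjStarAlgAut ℂ _ u A) * C) f g ∂μ := by
  simp only [mul_apply, twirl, of_apply]
  rw [integral_finsetSum _ fun h _ ↦ (integrable_kroneckerPower_conj μ A f h).mul_const _]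
  simp only [integral_mul_const]

lemma isUnitarilyEquivariant_twirl [DecidableEq ι] [μ.IsMulLeftInvariant] :
    IsUnitarilyEquivariant (twirl μ A ι) := by
  intro V hV
  have intertwine (u : unitaryGroup m ℂ) :
      V * conjStarAlgAut ℂ _ u A = conjStarAlgAut ℂ _ (⟨V, hV⟩ * u) A * V := by
    rw [conjStarAlgAut_mul_apply, conjStarAlgAut_apply ⟨V, hV⟩, Matrix.mul_assoc (V * _),
      mem_unitaryGroup_iff'.1 hV, Matrix.mul_one]
  ext f g
  rw [mul_twirl_apply, twirl_mul_apply]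
  simp only [← kroneckerPower_mul, intertwine]
  exact integral_mul_left_eq_self
    (fun u ↦ kroneckerPower ι (conjStarAlgAut ℂ _ u A * V) f g) (⟨V, hV⟩ : unitaryGroup m ℂ)

end Twirl

section DiagonalMoment

variable {m : Type*} [Fintype m] [DecidableEq m]

lemma conjStarAlgAut_apply_self_nonneg {A : Matrix m m ℂ} (hA : A.PosSemidef)
    (u : unitaryGroup m ℂ) (j : m) : 0 ≤ conjStarAlgAut ℂ _ u A j j :=
  (hA.mul_mul_conjTranspose_same (u : Matrix m m ℂ)).diag_nonneg

lemma permMatrix_mem_unitaryGroup (π : Equiv.Perm m) : π.permMatrix ℂ ∈ unitaryGroup m ℂ := by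
  rw [mem_unitaryGroup_iff, star_eq_conjTranspose, conjTranspose_permMatrix, ← permMatrix_mul]
  simp

variable [MeasurableSpace (unitaryGroup m ℂ)] (μ : Measure (unitaryGroup m ℂ)) (A : Matrix m m ℂ)

/-- The mixed moment of the diagonal entries of `u A u*` with exponents `a`. Real exponents are
allowed so that convexity in `a` makes sense; for positive semidefinite `A` taking real parts loses
nothing. -/
noncomputable def diagMoment (a : m → ℝ) : ℝ :=
  ∫ u, ∏ j, (conjStarAlgAut ℂ _ u A j j).re ^ a j ∂μ

lemma twirl_apply_self {A : Matrix m m ℂ} (hA : A.PosSemidef) {ι : Type*} [Fintype ι]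
    (f : ι → m) : twirl μ A ι f f = diagMoment μ A fun j ↦ content f j := by
  rw [diagMoment, ← integral_complex_ofReal]
  refine integral_congr_ae (.of_forall fun u ↦ ?_)
  have hre (j : m) : ((conjStarAlgAut ℂ _ u A j j).re : ℂ) = conjStarAlgAut ℂ _ u A j j :=
    (Complex.eq_re_of_ofReal_le (conjStarAlgAut_apply_self_nonneg hA u j)).symm
  simp only [kroneckerPower_apply, Real.rpow_natCast, Complex.ofReal_prod, Complex.ofReal_pow, hre]
  exact prod_comp_eq_prod_pow_content f fun j ↦ conjStarAlgAut ℂ _ u A j j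

variable [BorelSpace (unitaryGroup m ℂ)]

lemma convexOn_diagMoment [IsFiniteMeasure μ] {A : Matrix m m ℂ} (hA : A.PosSemidef) :
    ConvexOn ℝ (Set.Ici 0) (diagMoment μ A) := by
  refine convexOn_integral (convex_Ici 0) (fun u ↦ convexOn_prod_rpow fun j ↦
    (Complex.nonneg_iff.1 (conjStarAlgAut_apply_self_nonneg hA u j)).1) fun a ha ↦ ?_
  have hcont : Continuous fun u : unitaryGroup m ℂ ↦
      ∏ j, (conjStarAlgAut ℂ _ u A j j).re ^ a j :=
    continuous_finsetProd _ fun j _ ↦ (Complex.continuous_re.comp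
      (continuous_conjStarAlgAut_apply A j j)).rpow_const fun _ ↦ Or.inr (ha j)
  exact hcont.integrable_of_hasCompactSupport (.of_compactSpace _)

lemma diagMoment_comp_perm [μ.IsMulLeftInvariant] (a : m → ℝ) (π : Equiv.Perm m) :
    diagMoment μ A (a ∘ π) = diagMoment μ A a := by
  let P : unitaryGroup m ℂ := ⟨π.permMatrix ℂ, permMatrix_mem_unitaryGroup π⟩
  have diag_conj (u : unitaryGroup m ℂ) (j : m) :
      conjStarAlgAut ℂ _ (P * u) A j j = conjStarAlgAut ℂ _ u A (π j) (π j) := by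
    rw [conjStarAlgAut_mul_apply, conjStarAlgAut_apply P, star_eq_conjTranspose,
      conjTranspose_permMatrix]
    unfold P Equiv.Perm.permMatrix
    rw [PEquiv.toMatrix_toPEquiv_mul, PEquiv.mul_toMatrix_toPEquiv]
    rfl
  unfold diagMoment
  rw [← integral_mul_left_eq_self _ P]
  refine integral_congr_ae (.of_forall fun u ↦ ?_)
  simp only [diag_conj]
  exact Equiv.prod_comp π fun j ↦ (conjStarAlgAut ℂ _ u A j j).re ^ a j

end DiagonalMoment

section InducedCharacter

variable {n : ℕ}

lemma inducedChar_eq_card (η : Fin n → ℕ) (σ : Equiv.Perm (Fin n)) :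
    inducedChar n η σ = #{f : Fin n → Fin n | content f = η ∧ f ∘ σ = f} := by
  simp [inducedChar, content, Fintype.card_subtype, funext_iff]

lemma dInduced_eq_sum_kroneckerPower (η : Fin n → ℕ) (M : Matrix (Fin n) (Fin n) ℂ) :
    dInduced η M = ∑ f : Fin n → Fin n with content f = η,
      ∑ σ ∈ {σ : Equiv.Perm (Fin n) | f ∘ σ = f}, kroneckerPower (Fin n) M id σ := by
  have exchange (f : Fin n → Fin n) (σ : Equiv.Perm (Fin n)) :
      f ∈ ({f | content f = η} : Finset _) ∧ σ ∈ ({σ | f ∘ σ = f} : Finset (Equiv.Perm (Fin n))) ↔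
        f ∈ ({f | content f = η ∧ f ∘ σ = f} : Finset _) ∧ σ ∈ univ := by simp
  rw [dInduced, Finset.sum_comm' exchange]
  refine Finset.sum_congr rfl fun σ _ ↦ ?_
  rw [inducedChar_eq_card, Finset.sum_const, nsmul_eq_mul]
  rfl

variable (μ : Measure (unitaryGroup (Fin n) ℂ)) [IsFiniteMeasure μ] [μ.IsMulLeftInvariant]
  {A : Matrix (Fin n) (Fin n) ℂ} {η : Fin n → ℕ}

lemma integral_dInduced_conjU (hA : A.PosSemidef) (hη : ∑ i, η i = n) :
    ∫ u, dInduced η (conjU A u) ∂μ =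
      Nat.multinomial univ η * (diagMoment μ A fun i ↦ η i : ℂ) := by
  have hint (σ : Equiv.Perm (Fin n)) := integrable_kroneckerPower_conj μ A (id : Fin n → Fin n) σ
  calc ∫ u, dInduced η (conjU A u) ∂μ
      = ∫ u, ∑ f : Fin n → Fin n with content f = η, ∑ σ ∈ {σ : Equiv.Perm (Fin n) | f ∘ σ = f},
          kroneckerPower (Fin n) (conjStarAlgAut ℂ _ u A) id σ ∂μ := by
        simp only [dInduced_eq_sum_kroneckerPower]
        rfl
    _ = ∑ f : Fin n → Fin n with content f = η, ∑ σ ∈ {σ : Equiv.Perm (Fin n) | f ∘ σ = f},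
          twirl μ A (Fin n) id σ := by
        rw [integral_finsetSum _ fun f _ ↦ integrable_finsetSum _ fun σ _ ↦ hint σ]
        exact Finset.sum_congr rfl fun f _ ↦ integral_finsetSum _ fun σ _ ↦ hint σ
    _ = ∑ f : Fin n → Fin n with content f = η, (diagMoment μ A fun i ↦ η i : ℂ) := by
        refine Finset.sum_congr rfl fun f hf ↦ ?_
        rw [(isUnitarilyEquivariant_twirl μ A).sum_perm_apply_id_eq_apply_self,
          twirl_apply_self μ hA, (Finset.mem_filter.1 hf).2]
    _ = Nat.multinomial univ η * (diagMoment μ A fun i ↦ η i : ℂ) := by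
        rw [Finset.sum_const, card_content_eq_multinomial (by simpa using hη), nsmul_eq_mul]

lemma inv_multinomial_mul_re_integral_dInduced (hA : A.PosSemidef) (hη : ∑ i, η i = n) :
    (Nat.multinomial univ η : ℝ)⁻¹ * (∫ u, dInduced η (conjU A u) ∂μ).re =
      diagMoment μ A fun i ↦ η i := by
  have hne : (Nat.multinomial univ η : ℝ) ≠ 0 := Nat.cast_ne_zero.2 (Nat.multinomial_pos _ _).ne'
  rw [integral_dInduced_conjU μ hA hη, ← Complex.ofReal_natCast, Complex.re_ofReal_mul,
    Complex.ofReal_re, inv_mul_cancel_left₀ hne]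

end InducedCharacter

theorem stmt0_general (n : ℕ)
    (μ : Measure (Matrix.unitaryGroup (Fin n) ℂ))
    [μ.IsMulLeftInvariant] [IsFiniteMeasure μ]
    (A : Matrix (Fin n) (Fin n) ℂ) (hA : A.PosSemidef)
    (η η' : Fin n → ℕ) (hη : ∑ i, η i = n) (hη' : IsPartition n η')
    (hdom : Dominates η η') :
    ((Nat.multinomial Finset.univ η' : ℝ))⁻¹ * (∫ u, dInduced η' (conjU A u) ∂μ).re ≤
      ((Nat.multinomial Finset.univ η : ℝ))⁻¹ * (∫ u, dInduced η (conjU A u) ∂μ).re := by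
  rw [inv_multinomial_mul_re_integral_dInduced μ hA hη'.2,
    inv_multinomial_mul_re_integral_dInduced μ hA hη]
  refine le_of_convexOn_of_perm_invariant (convexOn_diagMoment μ hA)
    (fun π i ↦ Nat.cast_nonneg (η (π i))) (diagMoment_comp_perm μ A _)
    (fun i j hij ↦ Nat.cast_le.2 (hη'.1 hij)) ?_ fun j ↦ ?_
  · exact_mod_cast hη'.2.trans hη.symm
  · exact_mod_cast hdom j

theorem stmt0 (n : ℕ) (hn : 1 ≤ n)
    (μ : Measure (Matrix.unitaryGroup (Fin n) ℂ))
    [μ.IsMulLeftInvariant] [IsProbabilityMeasure μ]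
    (A : Matrix (Fin n) (Fin n) ℂ) (hA : A.PosSemidef)
    (η η' : Fin n → ℕ) (hη : IsPartition n η) (hη' : IsPartition n η')
    (hdom : Dominates η η') :
    ((Nat.multinomial Finset.univ η' : ℝ))⁻¹ * (∫ u, dInduced η' (conjU A u) ∂μ).re ≤
      ((Nat.multinomial Finset.univ η : ℝ))⁻¹ * (∫ u, dInduced η (conjU A u) ∂μ).re :=
  stmt0_general n μ A hA η η' hη.2 hη' hdom
end

section
/- Let n ≥ 1, let b_1, …, b_n be nonnegative real numbers, and let η and η' be partitions of n with η ⊵ η' in the dominance order. Then Σ_{σ ∈ S_n} ∏_{i=1}^n b_{σ(i)}^{η_i} ≥ Σ_{σ ∈ S_n} ∏_{i=1}^n b_{σ(i)}^{η'_i}; equivalently, the permanent of the n×n matrix whose (i,j) entry is b_j^{η_i} is at least the permanent of the matrix whose (i,j) entry is b_j^{η'_i}. (Formulas (24)–(26).) -/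
/-!
If `η` dominates `η'`, then `η'` is reached from `η` by moving one unit at a time from a larger
entry to a smaller one (Muirhead). Such a move from entry `j` to entry `k` lowers the symmetrized
monomial: pair each permutation `σ` with `σ * swap j k`, so that the two products share all factors
outside `j` and `k`; what is left is a two-variable inequality, an instance of the binary
rearrangement inequality.
-/

open Finset Matrix

section UnitTransfer

variable {ι : Type*} [DecidableEq ι]

/-- The exponent vector `ν` arises from `η` by a unit transfer (a Robin Hood move): one unit is
moved from an entry `j` to a strictly smaller entry `k`. The unit removed from `η j` is written on
the left-hand side to avoid truncated subtraction. -/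
def IsUnitTransfer (η ν : ι → ℕ) : Prop :=
  ∃ j k, η k < η j ∧ ν + Pi.single j 1 = η + Pi.single k 1

variable {η ν : ι → ℕ} {j k : ι}

lemma sum_add_ite_mem_of_add_single_eq (h : ν + Pi.single j 1 = η + Pi.single k 1)
    (s : Finset ι) :
    ∑ i ∈ s, ν i + (if j ∈ s then 1 else 0) = ∑ i ∈ s, η i + (if k ∈ s then 1 else 0) := by
  simpa [sum_add_distrib, sum_pi_single'] using congrArg (fun f : ι → ℕ ↦ ∑ i ∈ s, f i) h

-- Truncated subtraction makes `∑ i, (η i - η' i)` the total excess of `η` over `η'`.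
lemma sum_tsub_lt_sum_tsub_of_add_single_eq [Fintype ι] {η' : ι → ℕ}
    (h : ν + Pi.single j 1 = η + Pi.single k 1) (hj : η' j < η j) (hk : η k < η' k) :
    ∑ i, (ν i - η' i) < ∑ i, (η i - η' i) := by
  have happly (i : ι) : ν i + (if i = j then 1 else 0) = η i + (if i = k then 1 else 0) := by
    simpa [Pi.single_apply] using congrFun h i
  refine sum_lt_sum (fun i _ ↦ ?_) ⟨j, mem_univ j, ?_⟩ <;> grind

end UnitTransfer

lemma exists_first_lt_of_sum_eq {ι M : Type*} [Fintype ι] [LinearOrder ι] [AddCommMonoid M]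
    [LinearOrder M] [IsOrderedCancelAddMonoid M] {f g : ι → M} (hsum : ∑ i, f i = ∑ i, g i)
    (hne : f ≠ g) : ∃ k, f k < g k ∧ ∀ i < k, g i ≤ f i := by
  have hlt : ∃ k, f k < g k := by
    by_contra! hle
    exact hne (funext fun i ↦
      ((sum_eq_sum_iff_of_le fun i _ ↦ hle i).1 hsum.symm i (mem_univ i)).symm)
  obtain ⟨k, hk⟩ := exists_minimal_of_wellFoundedLT (fun k ↦ f k < g k) hlt
  exact ⟨k, hk.prop, fun i hi ↦ not_lt.1 (hk.not_prop_of_lt hi)⟩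

section Dominates

variable {n : ℕ} {η η' ν : Fin n → ℕ} {j k : Fin n}

lemma Dominates.exists_lt_of_lt (hdom : Dominates η η') (hk : η k < η' k) :
    ∃ j < k, η' j < η j := by
  by_contra! hle
  refine (hdom k).not_gt (sum_lt_sum (fun i hi ↦ ?_) ⟨k, mem_Iic.2 le_rfl, hk⟩)
  obtain hik | rfl := (mem_Iic.1 hi).lt_or_eq
  exacts [hle i hik, hk.le]

lemma Dominates.of_add_single_eq (hdom : Dominates η η') (hjk : j < k) (hj : η' j < η j)
    (hle : ∀ i < k, η' i ≤ η i) (h : ν + Pi.single j 1 = η + Pi.single k 1) :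
    Dominates ν η' := by
  intro m
  have hsum := sum_add_ite_mem_of_add_single_eq h (Iic m)
  simp only [mem_Iic] at hsum
  -- Only the partial sums ending in `[j, k)` decrease, and there the inequality was strict.
  have hstrict (hjm : j ≤ m) (hmk : m < k) : ∑ i ∈ Iic m, η' i < ∑ i ∈ Iic m, η i :=
    sum_lt_sum (fun i hi ↦ hle i ((mem_Iic.1 hi).trans_lt hmk)) ⟨j, mem_Iic.2 hjm, hj⟩
  have := hdom m
  grind

lemma Dominates.exists_isUnitTransfer (hdom : Dominates η η') (hη' : Antitone η')
    (hsum : ∑ i, η i = ∑ i, η' i) (hne : η ≠ η') :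
    ∃ ν, IsUnitTransfer η ν ∧ Dominates ν η' ∧ ∑ i, ν i = ∑ i, η' i ∧
      ∑ i, (ν i - η' i) < ∑ i, (η i - η' i) := by
  obtain ⟨k, hk, hle⟩ := exists_first_lt_of_sum_eq hsum hne
  obtain ⟨j, hjk, hj⟩ := hdom.exists_lt_of_lt hk
  have hkj : η k < η j := hk.trans_le ((hη' hjk.le).trans hj.le)
  have hsingle : Pi.single j 1 ≤ η + Pi.single k 1 := by
    intro i
    obtain rfl | hij := eq_or_ne i j
    · simpa [hjk.ne] using Nat.one_le_of_lt hj
    · simp [hij]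
  let ν := η + Pi.single k 1 - Pi.single j 1
  have hν : ν + Pi.single j 1 = η + Pi.single k 1 := tsub_add_cancel_of_le hsingle
  have hνsum : ∑ i, ν i = ∑ i, η i := by simpa using sum_add_ite_mem_of_add_single_eq hν univ
  exact ⟨ν, ⟨j, k, hkj, hν⟩, hdom.of_add_single_eq hjk hj hle hν, hνsum.trans hsum,
    sum_tsub_lt_sum_tsub_of_add_single_eq hν hj hk⟩

theorem Dominates.reflTransGen_isUnitTransfer (hdom : Dominates η η') (hη' : Antitone η')
    (hsum : ∑ i, η i = ∑ i, η' i) : Relation.ReflTransGen IsUnitTransfer η η' := by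
  induction hN : ∑ i, (η i - η' i) using Nat.strong_induction_on generalizing η with
  | _ N ih =>
    obtain rfl | hne := eq_or_ne η η'
    · exact .refl
    · obtain ⟨ν, hην, hνdom, hνsum, hlt⟩ := hdom.exists_isUnitTransfer hη' hsum hne
      exact .head hην (ih _ (hN ▸ hlt) hνdom hνsum rfl)

end Dominates

section Permanent

variable {ι R : Type*} [Fintype ι] [DecidableEq ι]

lemma two_nsmul_permanent [CommSemiring R] (M : Matrix ι ι R) {j k : ι} (hjk : j ≠ k) :
    2 • M.permanent = ∑ σ : Equiv.Perm ι,
      (M (σ j) j * M (σ k) k + M (σ k) j * M (σ j) k) * ∏ i ∈ {j, k}ᶜ, M (σ i) i := by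
  have hswap : M.permanent = ∑ σ : Equiv.Perm ι, ∏ i, M (σ (Equiv.swap j k i)) i :=
    (Equiv.sum_comp (Equiv.mulRight (Equiv.swap j k)) fun σ ↦ ∏ i, M (σ i) i).symm
  rw [two_nsmul]
  nth_rw 2 [hswap]
  rw [permanent, ← sum_add_distrib]
  refine sum_congr rfl fun σ _ ↦ ?_
  have hcompl : ∏ i ∈ {j, k}ᶜ, M (σ (Equiv.swap j k i)) i = ∏ i ∈ {j, k}ᶜ, M (σ i) i := by
    refine prod_congr rfl fun i hi ↦ ?_
    simp only [mem_compl, mem_insert, mem_singleton, not_or] at hi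
    rw [Equiv.swap_apply_of_ne_of_ne hi.1 hi.2]
  simp only [← prod_mul_prod_compl {j, k}, prod_pair hjk, hcompl, Equiv.swap_apply_left,
    Equiv.swap_apply_right, add_mul]

/-- The generalized Vandermonde matrix with `(i, j)` entry `b i ^ η j`, the transpose of the matrix
in the informal statement. Its permanent is the symmetrization of the monomial with exponents `η`
evaluated at `b`. -/
def generalizedVandermonde [Monoid R] (b : ι → R) (η : ι → ℕ) : Matrix ι ι R :=
  of fun i j ↦ b i ^ η j

variable [CommSemiring R] [LinearOrder R] [IsStrictOrderedRing R] [ExistsAddOfLE R]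

lemma pow_mul_pow_add_pow_mul_pow_le {x y : R} (hx : 0 ≤ x) (hy : 0 ≤ y) {p q s t : ℕ}
    (hps : p ≤ s) (hpt : p ≤ t) (hsum : s + t = q + p) :
    x ^ s * y ^ t + y ^ s * x ^ t ≤ x ^ q * y ^ p + y ^ q * x ^ p := by
  obtain ⟨s, rfl⟩ := Nat.exists_eq_add_of_le hps
  obtain ⟨t, rfl⟩ := Nat.exists_eq_add_of_le hpt
  obtain rfl : q = p + s + t := by omega
  have hrearr : x ^ s * y ^ t + y ^ s * x ^ t ≤ x ^ s * x ^ t + y ^ s * y ^ t := by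
    obtain hxy | hyx := le_total x y
    · exact mul_add_mul_le_mul_add_mul (pow_le_pow_left₀ hx hxy s) (pow_le_pow_left₀ hx hxy t)
    · exact mul_add_mul_le_mul_add_mul' (pow_le_pow_left₀ hy hyx s) (pow_le_pow_left₀ hy hyx t)
  calc
    _ = (x * y) ^ p * (x ^ s * y ^ t + y ^ s * x ^ t) := by ring
    _ ≤ (x * y) ^ p * (x ^ s * x ^ t + y ^ s * y ^ t) := by gcongr
    _ = _ := by ring

lemma IsUnitTransfer.permanent_generalizedVandermonde_le {b : ι → R} (hb : 0 ≤ b) {η ν : ι → ℕ}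
    (h : IsUnitTransfer η ν) :
    (generalizedVandermonde b ν).permanent ≤ (generalizedVandermonde b η).permanent := by
  obtain ⟨j, k, hkj, hν⟩ := h
  have hjk : j ≠ k := fun h ↦ hkj.ne (congrArg η h.symm)
  have hνj : ν j + 1 = η j := by simpa [hjk] using congrFun hν j
  have hνk : ν k = η k + 1 := by simpa [hjk.symm] using congrFun hν k
  have hcompl (σ : Equiv.Perm ι) :
      ∏ i ∈ {j, k}ᶜ, b (σ i) ^ ν i = ∏ i ∈ {j, k}ᶜ, b (σ i) ^ η i := by
    refine prod_congr rfl fun i hi ↦ ?_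
    simp only [mem_compl, mem_insert, mem_singleton, not_or] at hi
    rw [show ν i = η i by simpa [hi] using congrFun hν i]
  refine le_of_nsmul_le_nsmul_right two_ne_zero ?_
  rw [two_nsmul_permanent _ hjk, two_nsmul_permanent _ hjk]
  simp only [generalizedVandermonde, of_apply, hcompl]
  exact sum_le_sum fun σ _ ↦ mul_le_mul_of_nonneg_right
    (pow_mul_pow_add_pow_mul_pow_le (hb _) (hb _) (by omega) (by omega) (by omega))
    (prod_nonneg fun i _ ↦ pow_nonneg (hb _) _)

lemma permanent_generalizedVandermonde_le_of_reflTransGen {b : ι → R} (hb : 0 ≤ b)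
    {η ν : ι → ℕ} (h : Relation.ReflTransGen IsUnitTransfer η ν) :
    (generalizedVandermonde b ν).permanent ≤ (generalizedVandermonde b η).permanent := by
  induction h with
  | refl => exact le_rfl
  | tail _ hstep ih => exact (hstep.permanent_generalizedVandermonde_le hb).trans ih

end Permanent

theorem stmt4_general {R : Type*} [CommSemiring R] [LinearOrder R] [IsStrictOrderedRing R]
    [ExistsAddOfLE R] {n : ℕ} {b : Fin n → R} (hb : 0 ≤ b) {η η' : Fin n → ℕ}
    (hη' : Antitone η') (hsum : ∑ i, η i = ∑ i, η' i) (hdom : Dominates η η') :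
    ∑ σ : Equiv.Perm (Fin n), ∏ i, b (σ i) ^ η' i ≤
      ∑ σ : Equiv.Perm (Fin n), ∏ i, b (σ i) ^ η i :=
  permanent_generalizedVandermonde_le_of_reflTransGen hb
    (hdom.reflTransGen_isUnitTransfer hη' hsum)

theorem stmt4 (n : ℕ) (hn : 1 ≤ n) (b : Fin n → ℝ) (hb : ∀ i, 0 ≤ b i)
    (η η' : Fin n → ℕ) (hη : IsPartition n η) (hη' : IsPartition n η')
    (hdom : Dominates η η') :
    ∑ σ : Equiv.Perm (Fin n), ∏ i, b (σ i) ^ η' i ≤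
      ∑ σ : Equiv.Perm (Fin n), ∏ i, b (σ i) ^ η i :=
  stmt4_general hb hη'.1 (hη.2.trans hη'.2.symm) hdom
end

section
/- Let a and b be positive real numbers and let n be a real number. Then the function φ(x) = a^x b^{n−x} + a^{n−x} b^x is monotone nondecreasing on the interval [n/2, ∞); that is, for all real x, y with n/2 ≤ x ≤ y one has a^x b^{n−x} + a^{n−x} b^x ≤ a^y b^{n−y} + a^{n−y} b^y. (Lemma 8.) -/
/-!
The two terms have geometric mean `(a * b) ^ (n / 2)` and ratio `(a / b) ^ (2 * x - n)`, so their
sum is `2 * (a * b) ^ (n / 2) * cosh ((x - n / 2) * log (a / b))`. Since `cosh` is even and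
increases with the absolute value of its argument, the sum grows with the distance of `x` from
`n / 2`.
-/

theorem exp_add_exp_eq_two_mul_exp_mul_cosh (u v : ℝ) :
    Real.exp u + Real.exp v = 2 * Real.exp ((u + v) / 2) * Real.cosh ((u - v) / 2) := by
  have exp_left : Real.exp u = Real.exp ((u + v) / 2) * Real.exp ((u - v) / 2) := by
    rw [← Real.exp_add]
    ring_nf
  have exp_right : Real.exp v = Real.exp ((u + v) / 2) * Real.exp (-((u - v) / 2)) := by
    rw [← Real.exp_add]
    ring_nf
  rw [exp_left, exp_right, Real.cosh_eq]
  ring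

section

variable {a b : ℝ}

theorem rpow_mul_rpow_eq_exp (ha : 0 < a) (hb : 0 < b) (p q : ℝ) :
    a ^ p * b ^ q = Real.exp (p * Real.log a + q * Real.log b) := by
  rw [Real.exp_add, Real.rpow_def_of_pos ha, Real.rpow_def_of_pos hb, mul_comm p, mul_comm q]

theorem rpow_mul_rpow_add_swap_eq_cosh (ha : 0 < a) (hb : 0 < b) (p q : ℝ) :
    a ^ p * b ^ q + a ^ q * b ^ p =
      2 * (a * b) ^ ((p + q) / 2) * Real.cosh ((p - q) / 2 * Real.log (a / b)) := by
  rw [rpow_mul_rpow_eq_exp ha hb, rpow_mul_rpow_eq_exp ha hb,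
    exp_add_exp_eq_two_mul_exp_mul_cosh, Real.rpow_def_of_pos (mul_pos ha hb),
    Real.log_mul ha.ne' hb.ne', Real.log_div ha.ne' hb.ne']
  ring_nf

theorem rpow_mul_rpow_add_swap_le (ha : 0 < a) (hb : 0 < b) {p q r s : ℝ}
    (hsum : p + q = r + s) (hdist : |p - q| ≤ |r - s|) :
    a ^ p * b ^ q + a ^ q * b ^ p ≤ a ^ r * b ^ s + a ^ s * b ^ r := by
  have cosh_le : Real.cosh ((p - q) / 2 * Real.log (a / b)) ≤
      Real.cosh ((r - s) / 2 * Real.log (a / b)) := by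
    rw [Real.cosh_le_cosh, abs_mul, abs_mul, abs_div, abs_div]
    gcongr
  rw [rpow_mul_rpow_add_swap_eq_cosh ha hb, rpow_mul_rpow_add_swap_eq_cosh ha hb, hsum]
  gcongr

end

theorem stmt5_general (a b : ℝ) (ha : 0 < a) (hb : 0 < b) (n : ℝ) (x y : ℝ)
    (hdist : |x - n / 2| ≤ |y - n / 2|) :
    a ^ x * b ^ (n - x) + a ^ (n - x) * b ^ x ≤
      a ^ y * b ^ (n - y) + a ^ (n - y) * b ^ y := by
  have abs_sub_reflect (t : ℝ) : |t - (n - t)| = 2 * |t - n / 2| := by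
    rw [show t - (n - t) = 2 * (t - n / 2) by ring, abs_mul, abs_two]
  apply rpow_mul_rpow_add_swap_le ha hb (by ring)
  rw [abs_sub_reflect, abs_sub_reflect]
  gcongr

theorem stmt5 (a b : ℝ) (ha : 0 < a) (hb : 0 < b) (n : ℝ) (x y : ℝ)
    (hx : n / 2 ≤ x) (hxy : x ≤ y) :
    a ^ x * b ^ (n - x) + a ^ (n - x) * b ^ x ≤
      a ^ y * b ^ (n - y) + a ^ (n - y) * b ^ y :=
  stmt5_general a b ha hb n x y (abs_le_abs_of_nonneg (sub_nonneg.2 hx) (sub_le_sub_right hxy _))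
end

section
/- Let n ≥ 2, let A be an n×n positive semidefinite complex matrix, and let η = (η_1, η_2) be a two-part partition of n with η_1 ≥ η_2 ≥ 1, and set η' = (η_1 + 1, η_2 − 1). Then (Re ∫_{U(n)} d_{[η]}(u A u*) du − Re ∫_{U(n)} d_{[η']}(u A u*) du) / (C(n, η_2) − C(n, η_2 − 1)) ≤ Re ∫_{U(n)} per(u A u*) du, where C(n, k) is the binomial coefficient and per denotes the permanent. (Averaged version of the James–Liebeck theorem, Theorem 8.) -/
open MeasureTheory Matrix
open scoped ComplexOrder

/-!
The inequality already holds before averaging, with the two sides compared at `u A u*`.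
Let `P` be the orthogonal projection onto the kernel of the inclusion matrix between `k`-subsets and
`k + 1`-subsets. On the Boolean lattice the up operator `U` satisfies `U Uᵀ - Uᵀ U = n - 2 #S`, so
that matrix has full rank for `2k < n`, and the twisted trace `∑ S, P (σ S) S` is the character of
the two-row partition `(n - k - 1, k + 1)`, with value `∑ S, P S S` at `σ = 1`. For a fixed `S` the
function `σ ↦ P S S - P (σ S) S` is nonnegative, because `P` is positive semidefinite and invariant,
and it is bi-invariant under the Young subgroup stabilizing `S`. Averaging `∏ i, A i (σ i)` over a
double coset of that subgroup gives a nonnegative number: the coset contains an involution which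
only exchanges points of `S` with points of `Sᶜ`, and for it the average is the sum of the entries
of a Schur product of positive semidefinite matrices. Summing over `S` proves the inequality.
-/

open Equiv Finset MulAction
open scoped Pointwise

section SchurProduct

variable {𝕜 ι κ Y : Type*} [RCLike 𝕜]

theorem posSemidef_of_prod [Finite Y] (s : Finset ι) {M : ι → Matrix Y Y 𝕜}
    (hM : ∀ i ∈ s, (M i).PosSemidef) : (of fun a b => ∏ i ∈ s, M i a b).PosSemidef := by
  classical
  induction s using Finset.induction_on with
  | empty => simpa [vecMulVec, Pi.star_def] using posSemidef_vecMulVec_self_star (1 : Y → 𝕜)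
  | insert i s hi ih =>
    simp only [prod_insert hi]
    exact (hM i (mem_insert_self i s)).hadamard (ih fun j hj => hM j (mem_insert_of_mem hj))

theorem sum_sum_nonneg_of_posSemidef [Fintype Y] {M : Matrix Y Y 𝕜} (hM : M.PosSemidef) :
    0 ≤ ∑ a, ∑ b, M a b := by
  simpa [dotProduct, mulVec] using hM.dotProduct_mulVec_nonneg 1

-- Indices in `S` and fixed by `τ` pair `v a` with `v b`, those outside `S` pair `v b` with `v a`,
-- and the exchanged ones separate into a rank-one factor.
theorem posSemidef_prod_piecewise [Finite Y] [Fintype ι] [DecidableEq ι] {A : Matrix κ κ 𝕜}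
    (hA : A.PosSemidef) (S : Finset ι) {τ : Perm ι} (hτ : Function.Involutive τ)
    (hfix : ∀ i, (τ i ∈ S ↔ i ∈ S) → τ i = i) (v : Y → ι → κ) :
    (of fun a b => ∏ i, A (S.piecewise (v a) (v b) i)
      (S.piecewise (v b) (v a) (τ i))).PosSemidef := by
  let c (a : Y) : 𝕜 := ∏ i with i ∈ S ∧ τ i ∉ S, A (v a i) (v a (τ i))
  let K₁ : Matrix Y Y 𝕜 := of fun a b => ∏ i with i ∈ S ∧ τ i ∈ S, A (v a i) (v b i)
  let K₂ : Matrix Y Y 𝕜 := of fun a b => ∏ i with i ∉ S ∧ τ i ∉ S, A (v b i) (v a i)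
  have hK₁ : K₁.PosSemidef := posSemidef_of_prod _ fun i _ => hA.submatrix (v · i)
  have hK₂ : K₂.PosSemidef := posSemidef_of_prod _ fun i _ => hA.transpose.submatrix (v · i)
  have star_c (b : Y) : star (c b) = ∏ i with i ∉ S ∧ τ i ∈ S, A (v b i) (v b (τ i)) := by
    simp only [c, star_prod]
    refine prod_equiv τ (fun i => ?_) fun i _ => ?_
    · simp only [mem_filter_univ, hτ i, and_comm]
    · rw [hτ i, hA.isHermitian.apply]
  convert ((posSemidef_vecMulVec_self_star c).hadamard hK₁).hadamard hK₂ using 1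
  ext a b
  let f (i : ι) : 𝕜 := A (S.piecewise (v a) (v b) i) (S.piecewise (v b) (v a) (τ i))
  have h_c : ∏ i with i ∈ S ∧ τ i ∉ S, f i = c a := prod_congr rfl fun i hi => by
    rw [mem_filter_univ] at hi; simp [f, hi]
  have h_star : ∏ i with i ∉ S ∧ τ i ∈ S, f i = star (c b) := by
    rw [star_c]
    exact prod_congr rfl fun i hi => by rw [mem_filter_univ] at hi; simp [f, hi]
  have h_K₁ : ∏ i with i ∈ S ∧ τ i ∈ S, f i = K₁ a b := prod_congr rfl fun i hi => by
    rw [mem_filter_univ] at hi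
    simp [f, hfix i (by simp [hi]), hi]
  have h_K₂ : ∏ i with i ∉ S ∧ τ i ∉ S, f i = K₂ a b := prod_congr rfl fun i hi => by
    rw [mem_filter_univ] at hi
    simp [f, hfix i (by simp [hi]), hi]
  have h_split (p : ι → Prop) [DecidablePred p] :
      (∏ i with p i ∧ τ i ∈ S, f i) * ∏ i with p i ∧ τ i ∉ S, f i = ∏ i with p i, f i := by
    simp only [← filter_filter, prod_filter_mul_prod_filter_not]
  calc ∏ i, f i = (∏ i with i ∈ S, f i) * ∏ i with i ∉ S, f i :=
        (prod_filter_mul_prod_filter_not _ _ _).symm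
    _ = K₁ a b * c a * (star (c b) * K₂ a b) := by
        rw [← h_split (· ∈ S), ← h_split (· ∉ S), h_c, h_star, h_K₁, h_K₂]
    _ = c a * star (c b) * K₁ a b * K₂ a b := by ring

end SchurProduct

section YoungSubgroup

variable {ι : Type*}

theorem exists_involutive_exchange {S T : Finset ι} (h : #S = #T) :
    ∃ τ : Perm ι, Function.Involutive τ ∧ (∀ i, τ i ∈ S ↔ i ∈ T) ∧
      ∀ i, (i ∈ T ↔ i ∈ S) → τ i = i := by
  classical
  have hmem (i : ι) : i ∈ S \ T ∨ i ∈ T \ S ∨ (i ∈ T ↔ i ∈ S) := by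
    simp only [mem_sdiff]; tauto
  let e : (S \ T : Finset ι) ≃ (T \ S : Finset ι) := equivOfCardEq (card_sdiff_comm h)
  let f (i : ι) : ι :=
    if hi : i ∈ S \ T then e ⟨i, hi⟩ else if hi : i ∈ T \ S then e.symm ⟨i, hi⟩ else i
  have f_left {i : ι} (hi : i ∈ S \ T) : f i = e ⟨i, hi⟩ := dif_pos hi
  have f_right {i : ι} (hi : i ∈ T \ S) : f i = e.symm ⟨i, hi⟩ := by
    have : i ∉ S \ T := by simp only [mem_sdiff] at hi ⊢; tauto
    simp only [f, dif_neg this, dif_pos hi]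
  have f_fix {i : ι} (hi : i ∈ T ↔ i ∈ S) : f i = i := by
    have h₁ : i ∉ S \ T := by simp [hi]
    have h₂ : i ∉ T \ S := by simp [hi]
    simp only [f, dif_neg h₁, dif_neg h₂]
  have hf : Function.Involutive f := fun i => by
    rcases hmem i with hi | hi | hi
    · rw [f_left hi, f_right (e ⟨i, hi⟩).2]; simp
    · rw [f_right hi, f_left (e.symm ⟨i, hi⟩).2]; simp
    · rw [f_fix hi, f_fix hi]
  refine ⟨hf.toPerm, hf, fun i => ?_, fun i => f_fix⟩
  change f i ∈ S ↔ i ∈ T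
  rcases hmem i with hi | hi | hi
  · have := mem_sdiff.1 (e ⟨i, hi⟩).2
    rw [f_left hi]; rw [mem_sdiff] at hi; tauto
  · have := mem_sdiff.1 (e.symm ⟨i, hi⟩).2
    rw [f_right hi]; rw [mem_sdiff] at hi; tauto
  · rw [f_fix hi, hi]

variable [DecidableEq ι] (S : Finset ι)

/-- The Young subgroup `Perm S × Perm Sᶜ`, embedded in the permutations of `ι`. -/
def youngHom : Perm {i // i ∈ S} × Perm {i // i ∉ S} →* Perm ι :=
  Perm.subtypeCongrHom (· ∈ S)

theorem youngHom_mk_eq_piecewise (x y : Perm {i // i ∈ S} × Perm {i // i ∉ S}) :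
    ⇑(youngHom S (x.1, y.2)) = S.piecewise (youngHom S x) (youngHom S y) := by
  ext i
  by_cases hi : i ∈ S <;> simp [youngHom, Perm.subtypeCongrHom, hi]

theorem range_youngHom : (youngHom S).range = stabilizer (Perm ι) S := by
  ext σ
  constructor
  · rintro ⟨x, rfl⟩
    refine mem_stabilizer_finset'.2 fun i hi => ?_
    simp [youngHom, Perm.subtypeCongrHom, hi]
  · intro hσ
    have hσ' (i : ι) : σ i ∈ S ↔ i ∈ S := mem_stabilizer_finset.1 hσ i
    refine ⟨(σ.subtypePerm hσ', σ.subtypePerm fun i => not_congr (hσ' i)), ?_⟩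
    ext i
    by_cases hi : i ∈ S <;> simp [youngHom, Perm.subtypeCongrHom, hi]

end YoungSubgroup

section YoungAverage

theorem sum_sum_exchange_snd {α β M : Type*} [Fintype α] [Fintype β] [AddCommMonoid M]
    (f : α × β → α × β → M) :
    ∑ x : α × β, ∑ y : α × β, f (x.1, y.2) (y.1, x.2) = ∑ x, ∑ y, f x y := by
  have h : Function.Involutive
      fun z : (α × β) × (α × β) => ((z.1.1, z.2.2), (z.2.1, z.1.2)) := fun _ => rfl
  rw [← Fintype.sum_prod_type', ← Fintype.sum_prod_type']
  exact Fintype.sum_bijective _ h.bijective _ _ fun _ => rfl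

variable {𝕜 ι : Type*} [RCLike 𝕜] [Fintype ι] [DecidableEq ι]

theorem sum_youngHom_nonneg_of_involutive {A : Matrix ι ι 𝕜} (hA : A.PosSemidef) (S : Finset ι)
    {τ : Perm ι} (hτ : Function.Involutive τ) (hfix : ∀ i, (τ i ∈ S ↔ i ∈ S) → τ i = i) :
    0 ≤ ∑ x, ∑ y, ∏ i, A (youngHom S x i) (youngHom S y (τ i)) := by
  rw [← sum_sum_exchange_snd]
  simpa only [youngHom_mk_eq_piecewise, of_apply] using
    sum_sum_nonneg_of_posSemidef (posSemidef_prod_piecewise hA S hτ hfix fun x => youngHom S x)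

-- Every coset of the Young subgroup contains an involution that only moves points across `S`.
theorem sum_youngHom_nonneg {A : Matrix ι ι 𝕜} (hA : A.PosSemidef) (S : Finset ι) (σ : Perm ι) :
    0 ≤ ∑ x, ∑ y, ∏ i, A (youngHom S x i) (youngHom S y (σ i)) := by
  obtain ⟨τ, hτ, hmem, hfix⟩ := exists_involutive_exchange (card_smul_finset σ⁻¹ S).symm
  have hcoset : τ * σ⁻¹ ∈ (youngHom S).range := by
    rw [range_youngHom, mem_stabilizer_finset]
    simp [hmem, mem_inv_smul_finset_iff]
  obtain ⟨z, hz⟩ := hcoset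
  have hshift (x : Perm {i // i ∈ S} × Perm {i // i ∉ S}) :
      ∑ y, ∏ i, A (youngHom S x i) (youngHom S y (τ i)) =
        ∑ y, ∏ i, A (youngHom S x i) (youngHom S y (σ i)) :=
    Fintype.sum_equiv (Equiv.mulRight z) _ _ fun y => by simp [hz]
  simpa only [hshift] using
    sum_youngHom_nonneg_of_involutive hA S hτ fun i hi => hfix i ((hmem i).symm.trans hi)

end YoungAverage

section GenMatrixFun

variable {ι : Type*} [Fintype ι] [DecidableEq ι]

/-- The generalized matrix function `d_c(A) = ∑ σ, c σ * ∏ i, A i (σ i)`, as a linear form in its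
coefficient function `c`, which need not be a character. -/
def genMatrixFun {R : Type*} [CommSemiring R] (A : Matrix ι ι R) : (Perm ι → R) →ₗ[R] R :=
  Fintype.linearCombination R fun σ => ∏ i, A i (σ i)

theorem genMatrixFun_apply {R : Type*} [CommSemiring R] (A : Matrix ι ι R) (c : Perm ι → R) :
    genMatrixFun A c = ∑ σ, c σ * ∏ i, A i (σ i) :=
  rfl

theorem genMatrixFun_submatrix {R : Type*} [CommSemiring R] (A : Matrix ι ι R) (x y : Perm ι)
    (c : Perm ι → R) :
    genMatrixFun (A.submatrix x y) c = genMatrixFun A fun σ => c (y⁻¹ * σ * x) := by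
  simp only [genMatrixFun_apply, submatrix_apply]
  refine Fintype.sum_equiv ((Equiv.mulLeft y).trans (Equiv.mulRight x⁻¹)) _ _ fun σ => ?_
  congr 1
  · simp [mul_assoc]
  · exact Fintype.prod_equiv x _ _ fun i => by simp

theorem genMatrixFun_nonneg_of_biinvariant {𝕜 : Type*} [RCLike 𝕜] {A : Matrix ι ι 𝕜}
    (hA : A.PosSemidef) (S : Finset ι) {c : Perm ι → 𝕜} (hc : 0 ≤ c)
    (hinv : ∀ x ∈ stabilizer (Perm ι) S, ∀ y ∈ stabilizer (Perm ι) S, ∀ σ, c (y * σ * x) = c σ) :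
    0 ≤ genMatrixFun A c := by
  have mem_stab (x) : youngHom S x ∈ stabilizer (Perm ι) S := range_youngHom S ▸ ⟨x, rfl⟩
  have hsub (x y) : genMatrixFun (A.submatrix (youngHom S x) (youngHom S y)) c =
      genMatrixFun A c := by
    rw [genMatrixFun_submatrix]
    congr 1 with σ
    exact hinv _ (mem_stab x) _ (inv_mem (mem_stab y)) σ
  let N : 𝕜 := Fintype.card (Perm {i // i ∈ S} × Perm {i // i ∉ S})
  have haverage : N * (N * genMatrixFun A c) =
      ∑ σ, c σ * ∑ x, ∑ y, ∏ i, A (youngHom S x i) (youngHom S y (σ i)) := by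
    calc N * (N * genMatrixFun A c)
        = ∑ x, ∑ y, genMatrixFun (A.submatrix (youngHom S x) (youngHom S y)) c := by
          simp only [hsub, sum_const, card_univ, nsmul_eq_mul, N]
      _ = ∑ x, ∑ σ, ∑ y, c σ * ∏ i, A (youngHom S x i) (youngHom S y (σ i)) :=
          sum_congr rfl fun x _ => sum_comm
      _ = ∑ σ, c σ * ∑ x, ∑ y, ∏ i, A (youngHom S x i) (youngHom S y (σ i)) := by
          rw [sum_comm]; simp only [mul_sum]
  have hN : 0 < N := Nat.cast_pos.2 Fintype.card_pos
  have hcancel {z : 𝕜} (hz : 0 ≤ N * z) : 0 ≤ z :=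
    le_of_mul_le_mul_left (by rwa [mul_zero]) hN
  refine hcancel (hcancel ?_)
  rw [haverage]
  exact sum_nonneg fun σ _ => mul_nonneg (hc σ) (sum_youngHom_nonneg hA S σ)

end GenMatrixFun

section KernelProjection

variable {R m n : Type*} [CommRing R] [Fintype m] [Fintype n] [DecidableEq m] [DecidableEq n]

/-- The orthogonal projection onto the kernel of `E`. The formula is meaningful only when the Gram
matrix `E * Eᵀ` is invertible. -/
noncomputable def kerProj (E : Matrix m n R) : Matrix n n R :=
  1 - Eᵀ * (E * Eᵀ)⁻¹ * E

theorem transpose_kerProj (E : Matrix m n R) : (kerProj E)ᵀ = kerProj E := by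
  simp [kerProj, transpose_nonsing_inv, Matrix.mul_assoc]

theorem mul_kerProj {E : Matrix m n R} (hE : IsUnit (E * Eᵀ)) : E * kerProj E = 0 := by
  have hG : E * Eᵀ * (E * Eᵀ)⁻¹ = 1 := mul_nonsing_inv _ ((isUnit_iff_isUnit_det _).1 hE)
  rw [kerProj, Matrix.mul_sub, Matrix.mul_one, ← Matrix.mul_assoc, ← Matrix.mul_assoc, hG,
    Matrix.one_mul, sub_self]

theorem kerProj_mul_self {E : Matrix m n R} (hE : IsUnit (E * Eᵀ)) :
    kerProj E * kerProj E = kerProj E := by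
  nth_rewrite 1 [kerProj]
  rw [Matrix.sub_mul, Matrix.one_mul, Matrix.mul_assoc, mul_kerProj hE, Matrix.mul_zero, sub_zero]

theorem kerProj_submatrix_equiv {E : Matrix m n R} {e : Perm m} {f : Perm n}
    (hE : E.submatrix e f = E) : (kerProj E).submatrix f f = kerProj E := by
  have hEt : Eᵀ.submatrix f e = Eᵀ := by rw [← transpose_submatrix, hE]
  have hgram : (E * Eᵀ)⁻¹.submatrix e e = (E * Eᵀ)⁻¹ := by
    rw [← inv_submatrix_equiv, ← submatrix_mul_equiv E Eᵀ e f e, hE, hEt]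
  rw [kerProj, submatrix_sub, Pi.sub_apply, Pi.sub_apply, submatrix_one_equiv,
    ← submatrix_mul_equiv _ _ f e f, ← submatrix_mul_equiv _ _ f e e, hE, hEt, hgram]

theorem sum_kerProj_apply_perm {E : Matrix m n R} (hunit : IsUnit (E * Eᵀ)) {e : Perm m}
    {f : Perm n} (hE : E.submatrix e f = E) :
    ∑ j, kerProj E (f j) j =
      (Function.fixedPoints f).ncard - (Function.fixedPoints e).ncard := by
  have hG : E * Eᵀ * (E * Eᵀ)⁻¹ = 1 := mul_nonsing_inv _ ((isUnit_iff_isUnit_det _).1 hunit)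
  have hintertwine : E * f.permMatrix R = e.permMatrix R * E := by
    rw [PEquiv.mul_toMatrix_toPEquiv, PEquiv.toMatrix_toPEquiv_mul]
    nth_rewrite 1 [← hE]
    simp
  calc ∑ j, kerProj E (f j) j
      = (f.permMatrix R * kerProj E).trace := by
        rw [PEquiv.toMatrix_toPEquiv_mul]; rfl
    _ = (f.permMatrix R).trace - (f.permMatrix R * (Eᵀ * (E * Eᵀ)⁻¹) * E).trace := by
        rw [kerProj, Matrix.mul_sub, Matrix.mul_one, trace_sub, ← Matrix.mul_assoc]
    _ = (f.permMatrix R).trace - (e.permMatrix R * (E * Eᵀ * (E * Eᵀ)⁻¹)).trace := by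
        rw [trace_mul_comm, ← Matrix.mul_assoc, hintertwine]
        simp only [Matrix.mul_assoc]
    _ = (Function.fixedPoints f).ncard - (Function.fixedPoints e).ncard := by
        rw [hG, Matrix.mul_one, trace_permutation, trace_permutation]

theorem posSemidef_kerProj {E : Matrix m n ℝ} (hE : IsUnit (E * Eᵀ)) :
    (kerProj E).PosSemidef := by
  rw [← kerProj_mul_self hE]
  nth_rewrite 1 [← transpose_kerProj E]
  exact posSemidef_conjTranspose_mul_self _

theorem apply_perm_le_apply_of_posSemidef {ι : Type*} {P : Matrix ι ι ℝ} (hP : P.PosSemidef)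
    {f : Perm ι} (hf : P.submatrix f f = P) (j : ι) : P (f j) j ≤ P j j := by
  have hsymm : P j (f j) = P (f j) j := hP.isHermitian.apply (f j) j
  have hdiag : P (f j) (f j) = P j j := congr_fun₂ hf j j
  have := (hP.submatrix ![f j, j]).dotProduct_mulVec_nonneg ![1, -1]
  simp [dotProduct, mulVec, Fin.sum_univ_two, hsymm, hdiag] at this
  linarith

end KernelProjection

section CoverMatrix

open Classical in
/-- The up operator of an order: the incidence matrix of its covering relation. -/
noncomputable def covMatrix (L : Type*) [LT L] : Matrix L L ℝ :=
  of fun a b => if a ⋖ b then 1 else 0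

theorem covMatrix_mul_transpose_apply {L : Type*} [LT L] [Fintype L] (a b : L) :
    (covMatrix L * (covMatrix L)ᵀ) a b = {c | a ⋖ c ∧ b ⋖ c}.ncard := by
  classical
  simp [covMatrix, mul_apply, ← ite_and, Set.ncard_eq_toFinset_card', and_comm]

theorem transpose_mul_covMatrix_apply {L : Type*} [LT L] [Fintype L] (a b : L) :
    ((covMatrix L)ᵀ * covMatrix L) a b = {c | c ⋖ a ∧ c ⋖ b}.ncard := by
  classical
  simp [covMatrix, mul_apply, ← ite_and, Set.ncard_eq_toFinset_card', and_comm]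

theorem ncard_common_covers_eq {L : Type*} [Lattice L] [IsWeakUpperModularLattice L]
    [IsWeakLowerModularLattice L] {a b : L} (hab : a ≠ b) :
    {c | a ⋖ c ∧ b ⋖ c}.ncard = {c | c ⋖ a ∧ c ⋖ b}.ncard := by
  have hsup {c : L} (hc : a ⋖ c ∧ b ⋖ c) : c = a ⊔ b :=
    (hc.1.wcovBy.sup_eq hc.2.wcovBy hab).symm
  have hinf {c : L} (hc : c ⋖ a ∧ c ⋖ b) : c = a ⊓ b :=
    (hc.1.wcovBy.inf_eq hc.2.wcovBy hab).symm
  have hdiamond : a ⋖ a ⊔ b ∧ b ⋖ a ⊔ b ↔ a ⊓ b ⋖ a ∧ a ⊓ b ⋖ b :=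
    ⟨fun h => ⟨h.1.inf_of_sup_of_sup_left h.2, h.1.inf_of_sup_of_sup_right h.2⟩,
      fun h => ⟨h.1.sup_of_inf_of_inf_left h.2, h.1.sup_of_inf_of_inf_right h.2⟩⟩
  by_cases h : a ⋖ a ⊔ b ∧ b ⋖ a ⊔ b
  · have hup : {c | a ⋖ c ∧ b ⋖ c} = {a ⊔ b} :=
      Set.Subset.antisymm (fun _ => hsup) (Set.singleton_subset_iff.2 h)
    have hdown : {c | c ⋖ a ∧ c ⋖ b} = {a ⊓ b} :=
      Set.Subset.antisymm (fun _ => hinf) (Set.singleton_subset_iff.2 (hdiamond.1 h))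
    rw [hup, hdown, Set.ncard_singleton, Set.ncard_singleton]
  · have hup : {c | a ⋖ c ∧ b ⋖ c} = ∅ :=
      Set.eq_empty_of_forall_notMem fun c hc => h (hsup hc ▸ hc)
    have hdown : {c | c ⋖ a ∧ c ⋖ b} = ∅ :=
      Set.eq_empty_of_forall_notMem fun c hc => h (hdiamond.2 (hinf hc ▸ hc))
    rw [hup, hdown]

variable {α : Type*}

theorem ncard_covBy_finset [Fintype α] (S : Finset α) :
    {T | S ⋖ T}.ncard = Fintype.card α - #S := by
  classical
  have himage : {T | S ⋖ T} = (insert · S) '' (Sᶜ : Finset α) := by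
    ext T
    simp [Finset.covBy_iff_exists_insert, eq_comm]
  have hinj : Set.InjOn (insert · S) (Sᶜ : Finset α) := fun i hi j _ h =>
    (insert_inj (by simpa using hi)).1 h
  rw [himage, hinj.ncard_image, Set.ncard_coe_finset, card_compl]

theorem ncard_finset_covBy (T : Finset α) : {S | S ⋖ T}.ncard = #T := by
  classical
  have himage : {S | S ⋖ T} = T.erase '' T := by
    ext S
    simp [Finset.covBy_iff_exists_erase, eq_comm]
  rw [himage, (erase_injOn T).ncard_image, Set.ncard_coe_finset]

theorem covMatrix_finset_commutator [Fintype α] [DecidableEq α] :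
    covMatrix (Finset α) * (covMatrix (Finset α))ᵀ =
      (covMatrix (Finset α))ᵀ * covMatrix (Finset α) +
        diagonal fun S => (Fintype.card α - 2 * #S : ℝ) := by
  ext S T
  rw [Matrix.add_apply, covMatrix_mul_transpose_apply, transpose_mul_covMatrix_apply]
  obtain rfl | hST := eq_or_ne S T
  · simp only [and_self, ncard_covBy_finset, ncard_finset_covBy, diagonal_apply_eq]
    rw [Nat.cast_sub (card_le_univ S)]
    ring
  · rw [ncard_common_covers_eq hST, diagonal_apply_ne _ hST, add_zero]

/-- The inclusion matrix of the `k`-subsets against the `k + 1`-subsets of `α`. -/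
noncomputable def levelMatrix (α : Type*) (k : ℕ) :
    Matrix (Set.powersetCard α k) (Set.powersetCard α (k + 1)) ℝ :=
  (covMatrix (Finset α)).submatrix (↑) (↑)

theorem levelMatrix_submatrix_smul [DecidableEq α] (k : ℕ) (σ : Perm α) :
    (levelMatrix α k).submatrix (toPerm σ) (toPerm σ) = levelMatrix α k := by
  classical
  ext R S
  have hcov : σ • (R : Finset α) ⋖ σ • (S : Finset α) ↔ (R : Finset α) ⋖ S := by
    simp only [Finset.covBy_iff_card_sdiff_eq_one, smul_finset_subset_smul_finset_iff,
      ← smul_finset_sdiff, card_smul_finset]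
  simp only [levelMatrix, covMatrix, submatrix_apply, of_apply, toPerm_apply,
    Set.powersetCard.coe_smul, hcov]

variable [Fintype α]

theorem levelMatrix_mul_transpose (k : ℕ) :
    levelMatrix α k * (levelMatrix α k)ᵀ =
      (covMatrix (Finset α) * (covMatrix (Finset α))ᵀ).submatrix (↑) (↑) := by
  ext R R'
  refine Fintype.sum_of_injective (↑) Subtype.val_injective _ _ (fun S hS => ?_) fun S => rfl
  have hR : ¬ (R : Finset α) ⋖ S := fun h => hS <| by
    have hcard := Nat.covBy_iff_add_one_eq.1 h.card_finset
    rw [Set.powersetCard.card_eq] at hcard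
    exact ⟨⟨S, hcard.symm⟩, rfl⟩
  simp [covMatrix, hR]

theorem isUnit_levelMatrix_mul_transpose [DecidableEq α] {k : ℕ} (hk : 2 * k < Fintype.card α) :
    IsUnit (levelMatrix α k * (levelMatrix α k)ᵀ) := by
  let U := covMatrix (Finset α)
  have hgap : (0 : ℝ) < Fintype.card α - 2 * k := sub_pos.2 (mod_cast hk)
  have hgram : levelMatrix α k * (levelMatrix α k)ᵀ =
      (Uᵀ * U).submatrix (↑) (↑) + diagonal fun _ => (Fintype.card α - 2 * k : ℝ) := by
    rw [levelMatrix_mul_transpose, covMatrix_finset_commutator, submatrix_add, Pi.add_apply,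
      Pi.add_apply, submatrix_diagonal _ _ Subtype.val_injective]
    congr 2 with R
    simp
  rw [hgram]
  exact (PosDef.posSemidef_add ((posSemidef_conjTranspose_mul_self U).submatrix _)
    (PosDef.diagonal fun _ => hgap)).isUnit

end CoverMatrix

section TwoRow

variable {ι : Type*} [Fintype ι] [DecidableEq ι]

/-- The permutation character of `Perm ι` on the `k`-subsets of `ι`, that is, the induced character
`[(n - k, k)]`. -/
noncomputable def subsetChar (ι : Type*) [DecidableEq ι] (k : ℕ) (σ : Perm ι) : ℕ :=
  (fixedBy (Set.powersetCard ι k) σ).ncard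

theorem subsetChar_one (ι : Type*) [Fintype ι] [DecidableEq ι] (k : ℕ) :
    subsetChar ι k 1 = (Fintype.card ι).choose k := by
  rw [subsetChar, fixedBy_one_eq_univ, Set.ncard_univ, Set.powersetCard.card,
    Nat.card_eq_fintype_card]

theorem sum_kerProj_levelMatrix_smul {k : ℕ} (hk : 2 * k < Fintype.card ι) (σ : Perm ι) :
    ∑ S, kerProj (levelMatrix ι k) (σ • S) S = subsetChar ι (k + 1) σ - subsetChar ι k σ :=
  sum_kerProj_apply_perm (isUnit_levelMatrix_mul_transpose hk) (levelMatrix_submatrix_smul k σ)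

theorem kerProj_levelMatrix_smul_smul (k : ℕ) (σ : Perm ι) (S T : Set.powersetCard ι (k + 1)) :
    kerProj (levelMatrix ι k) (σ • S) (σ • T) = kerProj (levelMatrix ι k) S T :=
  congr_fun₂ (kerProj_submatrix_equiv (levelMatrix_submatrix_smul k σ)) S T

theorem kerProj_levelMatrix_smul_le {k : ℕ} (hk : 2 * k < Fintype.card ι) (σ : Perm ι)
    (S : Set.powersetCard ι (k + 1)) :
    kerProj (levelMatrix ι k) (σ • S) S ≤ kerProj (levelMatrix ι k) S S :=
  apply_perm_le_apply_of_posSemidef (posSemidef_kerProj (isUnit_levelMatrix_mul_transpose hk))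
    (kerProj_submatrix_equiv (levelMatrix_submatrix_smul k σ)) S

variable {𝕜 : Type*} [RCLike 𝕜]

theorem genMatrixFun_kerProj_nonneg {A : Matrix ι ι 𝕜} (hA : A.PosSemidef) {k : ℕ}
    (hk : 2 * k < Fintype.card ι) (S : Set.powersetCard ι (k + 1)) :
    0 ≤ genMatrixFun A fun σ =>
      ((kerProj (levelMatrix ι k) S S - kerProj (levelMatrix ι k) (σ • S) S : ℝ) : 𝕜) := by
  have hstab {x : Perm ι} (hx : x ∈ stabilizer (Perm ι) (S : Finset ι)) : x • S = S :=
    Subtype.ext (by simpa using hx)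
  refine genMatrixFun_nonneg_of_biinvariant hA S (fun σ => ?_) fun x hx y hy σ => ?_
  · exact RCLike.ofReal_nonneg.2 (sub_nonneg.2 (kerProj_levelMatrix_smul_le hk σ S))
  · have := kerProj_levelMatrix_smul_smul k y (σ • S) S
    rw [hstab hy] at this
    simp only [mul_smul, hstab hx, this]

theorem genMatrixFun_subsetChar_sub_le {A : Matrix ι ι 𝕜} (hA : A.PosSemidef) {k : ℕ}
    (hk : 2 * k < Fintype.card ι) :
    genMatrixFun A (fun σ => subsetChar ι (k + 1) σ) - genMatrixFun A (fun σ => subsetChar ι k σ) ≤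
      ((Fintype.card ι).choose (k + 1) - (Fintype.card ι).choose k) * genMatrixFun A 1 := by
  let c (S : Set.powersetCard ι (k + 1)) (σ : Perm ι) : 𝕜 :=
    ((kerProj (levelMatrix ι k) S S - kerProj (levelMatrix ι k) (σ • S) S : ℝ) : 𝕜)
  have hdiag : ∑ S, kerProj (levelMatrix ι k) S S =
      (Fintype.card ι).choose (k + 1) - (Fintype.card ι).choose k := by
    simpa only [one_smul, subsetChar_one] using sum_kerProj_levelMatrix_smul hk 1
  have hc : ∑ S, c S = ((Fintype.card ι).choose (k + 1) - (Fintype.card ι).choose k : 𝕜) • 1 -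
      ((fun σ => (subsetChar ι (k + 1) σ : 𝕜)) - fun σ => (subsetChar ι k σ : 𝕜)) := by
    ext σ
    simp only [c, Finset.sum_apply, ← RCLike.ofReal_sum, sum_sub_distrib, hdiag,
      sum_kerProj_levelMatrix_smul hk σ]
    simp
  have hsum : 0 ≤ genMatrixFun A (∑ S, c S) := by
    rw [map_sum]
    exact sum_nonneg fun S _ => genMatrixFun_kerProj_nonneg hA hk S
  rw [hc, map_sub, map_sub, map_smul] at hsum
  exact sub_nonneg.1 hsum

end TwoRow

section InducedCharacter

variable {ι κ : Type*} [DecidableEq ι] {z o : κ}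

theorem piecewise_const_eq_right_iff (hzo : z ≠ o) (S : Finset ι) (i : ι) :
    S.piecewise (fun _ => o) (fun _ => z) i = o ↔ i ∈ S := by
  by_cases hi : i ∈ S <;> simp [hi, hzo]

theorem piecewise_const_comp_perm_eq_iff (hzo : z ≠ o) (S : Finset ι) (σ : Perm ι) :
    S.piecewise (fun _ => o) (fun _ => z) ∘ σ = S.piecewise (fun _ => o) (fun _ => z) ↔
      σ • S = S := by
  rw [← mem_stabilizer_iff, mem_stabilizer_finset]
  refine ⟨fun h i => ?_, fun h => ?_⟩
  · rw [← piecewise_const_eq_right_iff hzo S i, ← congrFun h i, Function.comp_apply,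
      piecewise_const_eq_right_iff hzo, Perm.smul_def]
  · ext i
    simp [Finset.piecewise, ← Perm.smul_def, h i]

variable [Fintype ι] [DecidableEq κ]

theorem card_fiber_piecewise_const (hzo : z ≠ o) (S : Finset ι) (j : κ) :
    Nat.card {i // S.piecewise (fun _ => o) (fun _ => z) i = j} =
      (Pi.single z #Sᶜ + Pi.single o #S : κ → ℕ) j := by
  change Set.ncard {i | S.piecewise (fun _ => o) (fun _ => z) i = j} = _
  rcases eq_or_ne j z with rfl | hz
  · have : {i | S.piecewise (fun _ => o) (fun _ => j) i = j} = (Sᶜ : Finset ι) := by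
      ext i; by_cases hi : i ∈ S <;> simp [hi, hzo.symm]
    rw [this, Set.ncard_coe_finset]
    simp [hzo]
  rcases eq_or_ne j o with rfl | ho
  · simp [piecewise_const_eq_right_iff hzo, hz]
  · have : {i | S.piecewise (fun _ => o) (fun _ => z) i = j} = ∅ := by
      ext i; by_cases hi : i ∈ S <;> simp [hi, hz.symm, ho.symm]
    simp [this, hz, ho]

theorem eq_piecewise_const_of_card_fiber {a b : ℕ} {f : ι → κ}
    (hf : ∀ j, Nat.card {i // f i = j} = (Pi.single z a + Pi.single o b : κ → ℕ) j) :
    f = ({i | f i = o} : Finset ι).piecewise (fun _ => o) fun _ => z := by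
  ext i
  by_cases ho : f i = o
  · simp [ho]
  by_contra hz
  replace hz : f i ≠ z := by simpa [ho] using hz
  have hcard : Nat.card {i' // f i' = f i} = 0 := by
    rw [hf]
    simp [ho, hz]
  exact (Finite.card_eq_zero_iff.1 hcard).false ⟨i, rfl⟩

theorem card_comp_perm_invariant_eq_subsetChar (hzo : z ≠ o) {a b : ℕ}
    (hab : a + b = Fintype.card ι) (σ : Perm ι) :
    Nat.card {f : ι → κ // (∀ j, Nat.card {i // f i = j} =
      (Pi.single z a + Pi.single o b : κ → ℕ) j) ∧ f ∘ σ = f} = subsetChar ι b σ := by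
  let F (S : Set.powersetCard ι b) : ι → κ := (S : Finset ι).piecewise (fun _ => o) fun _ => z
  have hF : F.Injective := fun S T h => by
    ext i
    rw [← piecewise_const_eq_right_iff hzo S.1 i, ← piecewise_const_eq_right_iff hzo T.1 i]
    exact Eq.congr_left (congrFun h i)
  have himage : {f : ι → κ | (∀ j, Nat.card {i // f i = j} =
      (Pi.single z a + Pi.single o b : κ → ℕ) j) ∧ f ∘ σ = f} =
        F '' fixedBy (Set.powersetCard ι b) σ := by
    ext f
    constructor
    · rintro ⟨hf, hσ⟩
      have hcard : #{i | f i = o} = b := by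
        rw [← Fintype.card_subtype, ← Nat.card_eq_fintype_card, hf o]
        simp [hzo.symm]
      have hfF := eq_piecewise_const_of_card_fiber hf
      rw [hfF] at hσ
      exact ⟨⟨_, hcard⟩, Subtype.ext ((piecewise_const_comp_perm_eq_iff hzo _ σ).1 hσ), hfF.symm⟩
    · rintro ⟨S, hS, rfl⟩
      have hcompl : #(S : Finset ι)ᶜ = a := by
        rw [card_compl, Set.powersetCard.card_eq]
        omega
      exact ⟨fun j => by simpa [hcompl] using card_fiber_piecewise_const hzo (S : Finset ι) j,
        (piecewise_const_comp_perm_eq_iff hzo _ σ).2 (congrArg Subtype.val hS)⟩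
  rw [subsetChar, ← Set.ncard_image_of_injective _ hF, ← himage]
  rfl

/-- The shape `(a, b, 0, …, 0)` on `n` positions, in the `0`-indexed convention of `Fin n`. -/
def twoRow (n a b : ℕ) (i : Fin n) : ℕ :=
  if (i : ℕ) = 0 then a else if (i : ℕ) = 1 then b else 0

theorem inducedChar_twoRow {n a b : ℕ} (hn : 2 ≤ n) (hab : a + b = n) (σ : Perm (Fin n)) :
    inducedChar n (twoRow n a b) σ = subsetChar (Fin n) b σ := by
  let z : Fin n := ⟨0, by omega⟩
  let o : Fin n := ⟨1, by omega⟩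
  have hzo : z ≠ o := by simp [z, o]
  have hrow : twoRow n a b = Pi.single z a + Pi.single o b := by
    ext i
    simp only [twoRow, Pi.add_apply, Pi.single_apply, z, o, Fin.ext_iff]
    split_ifs <;> omega
  rw [inducedChar, hrow, card_comp_perm_invariant_eq_subsetChar hzo (by simpa using hab)]

theorem dInduced_twoRow_sub_le {n a k : ℕ} (hka : k < a) (hn : a + (k + 1) = n)
    {M : Matrix (Fin n) (Fin n) ℂ} (hM : M.PosSemidef) :
    dInduced (twoRow n a (k + 1)) M - dInduced (twoRow n (a + 1) k) M ≤
      (n.choose (k + 1) - n.choose k : ℝ) * ∑ σ : Perm (Fin n), ∏ i, M i (σ i) := by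
  have h := genMatrixFun_subsetChar_sub_le hM (k := k) (by rw [Fintype.card_fin]; omega)
  simpa [dInduced, genMatrixFun_apply, inducedChar_twoRow (by omega : 2 ≤ n) hn,
    inducedChar_twoRow (by omega : 2 ≤ n) (by omega : a + 1 + k = n)] using h

end InducedCharacter

section Unitary

theorem isCompact_unitaryGroup {𝕜 ι : Type*} [RCLike 𝕜] [Fintype ι] [DecidableEq ι] :
    IsCompact (unitaryGroup ι 𝕜 : Set (Matrix ι ι 𝕜)) := by
  have hball : IsCompact (Set.univ.pi fun _ => Set.univ.pi fun _ => Metric.closedBall 0 1 :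
      Set (Matrix ι ι 𝕜)) :=
    isCompact_univ_pi fun _ => isCompact_univ_pi fun _ => isCompact_closedBall 0 1
  have hclosed : IsClosed (unitary (Matrix ι ι 𝕜) : Set (Matrix ι ι 𝕜)) := isClosed_unitary
  refine hball.of_isClosed_subset hclosed fun u hu i _ j _ => ?_
  simpa using entry_norm_bound_of_unitary hu i j

theorem continuous_genMatrixFun {X R ι : Type*} [TopologicalSpace X] [CommSemiring R]
    [TopologicalSpace R] [IsTopologicalSemiring R] [Fintype ι] [DecidableEq ι]
    {M : X → Matrix ι ι R} (hM : Continuous M) (c : Perm ι → R) :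
    Continuous fun x => genMatrixFun (M x) c := by
  simp only [genMatrixFun_apply]
  exact continuous_finsetSum _ fun σ _ =>
    continuous_const.mul (continuous_finsetProd _ fun i _ => hM.matrix_elem i (σ i))

variable {n : ℕ}

theorem continuous_conjU (A : Matrix (Fin n) (Fin n) ℂ) : Continuous (conjU A) :=
  (continuous_subtype_val.mul continuous_const).mul continuous_subtype_val.star

theorem posSemidef_conjU {A : Matrix (Fin n) (Fin n) ℂ} (hA : A.PosSemidef)
    (u : unitaryGroup (Fin n) ℂ) : (conjU A u).PosSemidef :=
  hA.mul_mul_conjTranspose_same _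

theorem integrable_genMatrixFun_conjU (μ : Measure (unitaryGroup (Fin n) ℂ)) [IsFiniteMeasure μ]
    (A : Matrix (Fin n) (Fin n) ℂ) (c : Perm (Fin n) → ℂ) :
    Integrable (fun u => genMatrixFun (conjU A u) c) μ := by
  have : CompactSpace (unitaryGroup (Fin n) ℂ) :=
    isCompact_iff_compactSpace.1 isCompact_unitaryGroup
  exact (continuous_genMatrixFun (continuous_conjU A) c).integrable_of_hasCompactSupport
    (HasCompactSupport.of_compactSpace _)

end Unitary

section AveragedInequality

theorem choose_lt_choose_succ {n k : ℕ} (h : 2 * k + 1 < n) : n.choose k < n.choose (k + 1) := by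
  refine lt_of_mul_lt_mul_right ?_ (Nat.zero_le (k + 1))
  rw [Nat.choose_succ_right_eq]
  exact Nat.mul_lt_mul_of_pos_left (by omega) (Nat.choose_pos (by omega))

theorem stmt7_general {n : ℕ} (μ : Measure (unitaryGroup (Fin n) ℂ)) [IsFiniteMeasure μ]
    {A : Matrix (Fin n) (Fin n) ℂ} (hA : A.PosSemidef) {η₁ η₂ : ℕ} (h12 : η₂ ≤ η₁) (h2 : 1 ≤ η₂)
    (hsum : η₁ + η₂ = n) :
    ((∫ u, dInduced (twoRow n η₁ η₂) (conjU A u) ∂μ).re -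
        (∫ u, dInduced (twoRow n (η₁ + 1) (η₂ - 1)) (conjU A u) ∂μ).re) /
        ((n.choose η₂ : ℝ) - (n.choose (η₂ - 1) : ℝ)) ≤
      (∫ u, ∑ σ : Perm (Fin n), ∏ i, conjU A u i (σ i) ∂μ).re := by
  obtain ⟨k, rfl⟩ : ∃ k, η₂ = k + 1 := ⟨η₂ - 1, by omega⟩
  rw [Nat.add_sub_cancel]
  have hpos : (0 : ℝ) < n.choose (k + 1) - n.choose k :=
    sub_pos.2 (mod_cast choose_lt_choose_succ (by omega))
  have hint (η : Fin n → ℕ) : Integrable (fun u => dInduced η (conjU A u)) μ :=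
    integrable_genMatrixFun_conjU μ A fun σ => inducedChar n η σ
  have hper : Integrable (fun u => ∑ σ : Perm (Fin n), ∏ i, conjU A u i (σ i)) μ := by
    simpa [genMatrixFun_apply] using integrable_genMatrixFun_conjU μ A 1
  have hle : ∫ u, dInduced (twoRow n η₁ (k + 1)) (conjU A u) -
      dInduced (twoRow n (η₁ + 1) k) (conjU A u) ∂μ ≤
        ∫ u, (n.choose (k + 1) - n.choose k : ℝ) * ∑ σ : Perm (Fin n), ∏ i, conjU A u i (σ i) ∂μ :=
    integral_mono ((hint _).sub (hint _)) (hper.const_mul _) fun u =>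
      dInduced_twoRow_sub_le (by omega) hsum (posSemidef_conjU hA u)
  rw [integral_sub (hint _) (hint _), integral_const_mul] at hle
  rw [div_le_iff₀' hpos, ← Complex.sub_re, ← Complex.re_ofReal_mul]
  exact (Complex.le_def.1 hle).1

end AveragedInequality

theorem stmt7 (n : ℕ) (hn : 2 ≤ n)
    (μ : Measure (Matrix.unitaryGroup (Fin n) ℂ))
    [μ.IsMulLeftInvariant] [IsProbabilityMeasure μ]
    (A : Matrix (Fin n) (Fin n) ℂ) (hA : A.PosSemidef)
    (η₁ η₂ : ℕ) (h12 : η₂ ≤ η₁) (h2 : 1 ≤ η₂) (hsum : η₁ + η₂ = n) :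
    ((∫ u, dInduced (fun i : Fin n => if (i : ℕ) = 0 then η₁ else if (i : ℕ) = 1 then η₂ else 0)
          (conjU A u) ∂μ).re -
        (∫ u, dInduced (fun i : Fin n => if (i : ℕ) = 0 then η₁ + 1 else if (i : ℕ) = 1 then η₂ - 1 else 0)
          (conjU A u) ∂μ).re) /
        ((n.choose η₂ : ℝ) - (n.choose (η₂ - 1) : ℝ)) ≤
      (∫ u, ∑ σ : Equiv.Perm (Fin n), ∏ i, (conjU A u) i (σ i) ∂μ).re :=
  stmt7_general μ hA h12 h2 hsum
end

section
/- Let n ≥ 1 and 1 ≤ k ≤ n, and let p be a polynomial in n² variables with complex coefficients, viewed as a polynomial function of the entries of an n×n complex matrix. If p(A) = 0 for every positive semidefinite n×n complex matrix A of rank at most k, then p(A) = 0 for every n×n complex matrix A of rank at most k. (Zariski density of positive semidefinite matrices of bounded rank, used in the proof of Theorem 6.) -/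
open scoped ComplexOrder

/-!
A matrix of rank at most `k` factors as `B * C` through a space of dimension at most `k`, and
`B * Bᴴ` is positive semidefinite of rank at most `k`. So the polynomial `(B, C) ↦ p (B * C)`
vanishes whenever `Cᵀ` is the entrywise conjugate of `B`. Such pairs are Zariski dense among all
pairs: every `(z, w)` has the form `(x + i y, conj x + i conj y)`, so it is the point `t = i` of the
line `t ↦ (x + t y, conj x + t conj y)`, whose points at real `t` are pairs of conjugate vectors.
-/

section Polynomial

open MvPolynomial
open scoped ComplexConjugate

theorem polynomial_eq_zero_of_eval_injective {ι R : Type*} [Infinite ι] [CommRing R] [IsDomain R]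
    {g : ι → R} (hg : Function.Injective g) {f : Polynomial R} (h : ∀ i, f.eval (g i) = 0) :
    f = 0 :=
  f.eq_zero_of_infinite_isRoot <|
    (Set.infinite_range_of_injective hg).mono (Set.range_subset_iff.2 h)

theorem polynomial_eval_mvPolynomial_aeval {σ R : Type*} [CommSemiring R] (g : σ → Polynomial R)
    (P : MvPolynomial σ R) (t : R) :
    (aeval g P).eval t = eval (fun s => (g s).eval t) P :=
  comp_aeval_apply g (Polynomial.aeval t) P

theorem mvPolynomial_eval_bind₁ {σ τ R : Type*} [CommSemiring R] (x : τ → R)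
    (g : σ → MvPolynomial τ R) (P : MvPolynomial σ R) :
    eval x (bind₁ g P) = eval (fun s => eval x (g s)) P :=
  aeval_bind₁ x g P

theorem exists_add_mul_I_eq_and_conj_add_conj_mul_I_eq (z w : ℂ) :
    ∃ x y : ℂ, x + y * Complex.I = z ∧ conj x + conj y * Complex.I = w := by
  refine ⟨(z + conj w) / 2, (z - conj w) / 2 * -Complex.I, ?_, ?_⟩
  · linear_combination -(z - conj w) / 2 * Complex.I_mul_I
  · simp only [map_div₀, map_add, map_mul, map_neg, map_sub, map_ofNat, Complex.conj_I,
      Complex.conj_conj]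
    linear_combination (conj z - w) / 2 * Complex.I_mul_I

theorem mvPolynomial_eq_zero_of_eval_conj {σ : Type*} {P : MvPolynomial (σ ⊕ σ) ℂ}
    (h : ∀ z : σ → ℂ, eval (Sum.elim z fun s => conj (z s)) P = 0) : P = 0 := by
  refine MvPolynomial.funext fun u => ?_
  choose x y hz hw using fun s =>
    exists_add_mul_I_eq_and_conj_add_conj_mul_I_eq (u (.inl s)) (u (.inr s))
  let line : σ ⊕ σ → Polynomial ℂ := Sum.elim
    (fun s => .C (x s) + .C (y s) * .X) (fun s => .C (conj (x s)) + .C (conj (y s)) * .X)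
  have line_ofReal (t : ℝ) : (fun s => (line s).eval (t : ℂ)) =
      Sum.elim (fun s => x s + y s * t) (fun s => conj (x s + y s * t)) := by
    ext (s | s) <;> simp [line]
  have line_I : (fun s => (line s).eval Complex.I) = u := by
    ext (s | s)
    · simpa [line] using hz s
    · simpa [line] using hw s
  have aeval_line : aeval line P = 0 :=
    polynomial_eq_zero_of_eval_injective Complex.ofReal_injective fun t => by
      rw [polynomial_eval_mvPolynomial_aeval, line_ofReal, h]
  rw [← line_I, ← polynomial_eval_mvPolynomial_aeval, aeval_line, Polynomial.eval_zero, map_zero]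

end Polynomial

section Matrix

open MvPolynomial
open scoped Matrix

theorem exists_rank_factorization {m n K : Type*} [Fintype n] [Field K] (A : Matrix m n K) :
    ∃ (B : Matrix m (Fin A.rank) K) (C : Matrix (Fin A.rank) n K), A = B * C := by
  classical
  let b : Module.Basis (Fin A.rank) K A.mulVecLin.range := Module.finBasis K A.mulVecLin.range
  let col (j : n) : A.mulVecLin.range := ⟨A.col j, Pi.single j 1, by simp⟩
  refine ⟨.of fun i l => (b l : m → K) i, .of fun l j => b.repr (col j) l, ?_⟩
  ext i j
  have col_eq : A.col j = ∑ l, b.repr (col j) l • (b l : m → K) := by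
    simpa only [Submodule.coe_sum, Submodule.coe_smul] using
      congrArg Subtype.val (b.sum_repr (col j)).symm
  simpa [Matrix.mul_apply, mul_comm] using congrFun col_eq i

theorem eval_mul_eq_zero_of_eval_mul_conjTranspose {m l : Type*} [Fintype l]
    {p : MvPolynomial (m × m) ℂ}
    (h : ∀ B : Matrix m l ℂ, eval (fun q => (B * Bᴴ) q.1 q.2) p = 0)
    (B : Matrix m l ℂ) (C : Matrix l m ℂ) : eval (fun q => (B * C) q.1 q.2) p = 0 := by
  let F : MvPolynomial ((m × l) ⊕ (m × l)) ℂ := bind₁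
    (fun q => ∑ a, X (.inl (q.1, a)) * X (.inr (q.2, a))) p
  have eval_F (z w : m × l → ℂ) : eval (Sum.elim z w) F =
      eval (fun q => ∑ a, z (q.1, a) * w (q.2, a)) p := by
    simp [F, mvPolynomial_eval_bind₁]
  have F_eq_zero : F = 0 := mvPolynomial_eq_zero_of_eval_conj fun z => by
    rw [eval_F]
    exact h (.of fun i a => z (i, a))
  have eval_F_BC := eval_F (fun q => B q.1 q.2) (fun q => C q.2 q.1)
  simpa [F_eq_zero, Matrix.mul_apply] using eval_F_BC.symm

theorem stmt8_general {m : Type*} [Fintype m] (k : ℕ) (p : MvPolynomial (m × m) ℂ)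
    (h : ∀ A : Matrix m m ℂ, A.PosSemidef → A.rank ≤ k → eval (fun q => A q.1 q.2) p = 0)
    (A : Matrix m m ℂ) (hA : A.rank ≤ k) : eval (fun q => A q.1 q.2) p = 0 := by
  obtain ⟨B, C, hBC⟩ := exists_rank_factorization A
  rw [hBC]
  refine eval_mul_eq_zero_of_eval_mul_conjTranspose (fun D => h _ ?_ ?_) B C
  · exact Matrix.posSemidef_self_mul_conjTranspose D
  · calc (D * Dᴴ).rank ≤ D.rank := Matrix.rank_mul_le_left D Dᴴ
      _ ≤ A.rank := by simpa using D.rank_le_card_width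
      _ ≤ k := hA

end Matrix

theorem stmt8 (n k : ℕ) (hn : 1 ≤ n) (hk1 : 1 ≤ k) (hkn : k ≤ n)
    (p : MvPolynomial (Fin n × Fin n) ℂ)
    (h : ∀ A : Matrix (Fin n) (Fin n) ℂ, A.PosSemidef → A.rank ≤ k →
      MvPolynomial.eval (fun q => A q.1 q.2) p = 0) :
    ∀ A : Matrix (Fin n) (Fin n) ℂ, A.rank ≤ k →
      MvPolynomial.eval (fun q => A q.1 q.2) p = 0 :=
  stmt8_general k p h
end

section
/- Let n ≥ 1 and let A be an n×n complex matrix. Consider the vector space W₀ of all functions φ : ({1,…,n} → {1,…,n}) → ℂ, with the symmetric group S_n acting by (σ · φ)(f) = φ(f ∘ σ), and let E : W₀ → W₀ be the linear map whose matrix in the standard basis is E(f, g) = ∫_{U(n)} ∏_{k=1}^n (u A u*)_{f(k), g(k)} du. Let V ⊆ W₀ be any S_n-invariant subspace. Then E maps V into itself, and the trace of the restriction of E to V equals Σ_{σ ∈ S_n} χ_V(σ) · ∫_{U(n)} ∏_{i=1}^n (u A u*)_{i, σ(i)} du, where χ_V(σ) is the trace of the action of σ on V. (Lemma 7.) -/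
open MeasureTheory Matrix
open scoped ComplexOrder

/-!
By left invariance of the measure, the averaged operator `E` commutes with `v^{⊗κ}` for every
unitary `v`. Unitary matrices are Zariski dense in all matrices, so `E` commutes with `B^{⊗κ}` for
every matrix `B`, and as in Schur–Weyl duality `E` is a combination of the place permutations `P σ`.
The coefficients are the entries of `E` in a row indexed by an injection `e : κ ↪ ι`, namely
`E = ∑ σ, (∫ ∏ k, (u A u*) (e k) (e (σ k))) • P σ`. Such a combination preserves every invariant
subspace, and the trace formula is linearity of the trace.
-/

open Polynomial (C X evalRingHom)
open scoped Polynomial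

section LinearMap

variable {R M α : Type*} [CommSemiring R] [AddCommMonoid M] [Module R M] [Fintype α]
  {P : α → M →ₗ[R] M} {V : Submodule R M}

theorem sum_smul_apply_mem (hV : ∀ a, ∀ x ∈ V, P a x ∈ V) (c : α → R) :
    ∀ x ∈ V, (∑ a, c a • P a) x ∈ V := by
  intro x hx
  rw [LinearMap.sum_apply]
  exact V.sum_mem fun a _ => V.smul_mem _ (hV a x hx)

theorem trace_restrict_sum_smul (hV : ∀ a, ∀ x ∈ V, P a x ∈ V) (c : α → R)
    (h : ∀ x ∈ V, (∑ a, c a • P a) x ∈ V) :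
    LinearMap.trace R V ((∑ a, c a • P a).restrict h) =
      ∑ a, LinearMap.trace R V ((P a).restrict (hV a)) * c a := by
  have restrict_eq : (∑ a, c a • P a).restrict h = ∑ a, c a • (P a).restrict (hV a) := by
    ext x
    simp [LinearMap.sum_apply]
  simp only [restrict_eq, map_sum, map_smul, smul_eq_mul, mul_comm]

end LinearMap

theorem exists_perm_eq_comp_of_card_fiber_eq {α β : Type*} [Fintype α] [DecidableEq β]
    {f g : α → β} (h : ∀ b, Fintype.card {a // f a = b} = Fintype.card {a // g a = b}) :
    ∃ σ : Equiv.Perm α, g = f ∘ σ := by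
  let e (b : β) : {a // g a = b} ≃ {a // f a = b} := Fintype.equivOfCardEq (h b).symm
  exact ⟨Equiv.ofFiberEquiv e, funext fun a => (Equiv.ofFiberEquiv_map e a).symm⟩

theorem commute_of_infinite_commute_eval {R m : Type*} [CommRing R] [IsDomain R] [Fintype m]
    [DecidableEq m] {P Q : Matrix m m R[X]} {s : Set R} (hs : s.Infinite)
    (h : ∀ z ∈ s, Commute ((evalRingHom z).mapMatrix P) ((evalRingHom z).mapMatrix Q)) :
    Commute P Q := by
  ext1 i j
  refine Polynomial.eq_of_infinite_eval_eq _ _ (hs.mono fun z hz => ?_)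
  have h_eval : (evalRingHom z).mapMatrix (P * Q) = (evalRingHom z).mapMatrix (Q * P) := by
    simpa only [map_mul] using (h z hz).eq
  exact congrFun₂ h_eval i j

section TensorPow

variable {ι R : Type*} [Fintype ι] [DecidableEq ι] [CommSemiring R]
  (κ : Type*) [Fintype κ] [DecidableEq κ]

/-- The tensor power `B ↦ B^{⊗κ}` of square matrices, in the basis of `⊗^κ R^ι` formed by the pure
tensors `⨂ k, e_{f k}`, which are indexed by the functions `f : κ → ι`. -/
def tensorPow : Matrix ι ι R →* Matrix (κ → ι) (κ → ι) R where
  toFun B := of fun f g => ∏ k, B (f k) (g k)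
  map_one' := by
    ext f g
    simp [one_apply, Finset.prod_ite_zero, funext_iff]
  map_mul' B C := by
    ext f g
    simp [mul_apply, Finset.prod_univ_sum, Finset.prod_mul_distrib]

variable {κ}

theorem tensorPow_apply (B : Matrix ι ι R) (f g : κ → ι) :
    tensorPow κ B f g = ∏ k, B (f k) (g k) := rfl

theorem tensorPow_diagonal (t : ι → R) :
    tensorPow κ (diagonal t) = diagonal fun f => ∏ k, t (f k) := by
  ext f g
  simp [tensorPow_apply, diagonal_apply, Finset.prod_ite_zero, funext_iff]

theorem map_tensorPow {S : Type*} [CommSemiring S] (φ : R →+* S) (B : Matrix ι ι R) :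
    φ.mapMatrix (tensorPow κ B) = tensorPow κ (φ.mapMatrix B) := by
  ext f g
  simp [tensorPow_apply]

end TensorPow

section Commutant

variable {ι κ : Type*} [Fintype ι] [DecidableEq ι] [Fintype κ] [DecidableEq κ]
  {M : Matrix (κ → ι) (κ → ι) ℂ}

theorem diagonal_mem_unitaryGroup {𝕜 : Type*} [RCLike 𝕜] {t : ι → 𝕜} (ht : ∀ i, ‖t i‖ = 1) :
    diagonal t ∈ unitaryGroup ι 𝕜 := by
  simp [mem_unitaryGroup_iff, star_eq_conjTranspose, diagonal_conjTranspose, RCLike.mul_conj, ht]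

theorem exists_perm_of_commute_tensorPow_unitary
    (hM : ∀ v ∈ unitaryGroup ι ℂ, Commute (tensorPow κ v) M) {f g : κ → ι} (hfg : M f g ≠ 0) :
    ∃ σ : Equiv.Perm κ, g = f ∘ σ := by
  have prod_eq {t : ι → ℂ} (ht : ∀ i, ‖t i‖ = 1) : ∏ k, t (f k) = ∏ k, t (g k) := by
    have h := congrFun₂ (hM _ (diagonal_mem_unitaryGroup ht)).eq f g
    rw [tensorPow_diagonal, diagonal_mul, mul_diagonal, mul_comm] at h
    exact mul_left_cancel₀ hfg h
  obtain ⟨z, hz⟩ : ∃ z : ℂ, IsPrimitiveRoot z (Fintype.card κ + 1) :=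
    ⟨_, Complex.isPrimitiveRoot_exp _ (Nat.succ_ne_zero _)⟩
  have hz_norm : ‖z‖ = 1 := hz.norm'_eq_one (Nat.succ_ne_zero _)
  refine exists_perm_eq_comp_of_card_fiber_eq fun j => ?_
  have hpow := prod_eq (t := fun i => if i = j then z else 1)
    fun i => by split_ifs <;> simp [hz_norm]
  simp only [Finset.prod_ite, Finset.prod_const, one_pow, mul_one, ← Fintype.card_subtype] at hpow
  exact hz.pow_inj (Nat.lt_succ_of_le (Fintype.card_subtype_le _))
    (Nat.lt_succ_of_le (Fintype.card_subtype_le _)) hpow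

theorem commute_tensorPow_diagonal (hM : ∀ v ∈ unitaryGroup ι ℂ, Commute (tensorPow κ v) M)
    (t : ι → ℂ) :
    Commute (tensorPow κ (diagonal t)) M := by
  ext f g
  rw [tensorPow_diagonal, diagonal_mul, mul_diagonal, mul_comm]
  by_cases hfg : M f g = 0
  · simp only [hfg, zero_mul]
  · obtain ⟨σ, rfl⟩ := exists_perm_of_commute_tensorPow_unitary hM hfg
    rw [← Equiv.prod_comp σ]
    rfl

theorem commute_tensorPow_of_isHermitian
    (hM : ∀ v ∈ unitaryGroup ι ℂ, Commute (tensorPow κ v) M) {H : Matrix ι ι ℂ}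
    (hH : H.IsHermitian) : Commute (tensorPow κ H) M := by
  rw [hH.spectral_theorem, Unitary.conjStarAlgAut_apply, map_mul, map_mul]
  exact ((hM _ hH.eigenvectorUnitary.2).mul_left (commute_tensorPow_diagonal hM _)).mul_left
    (hM _ (star hH.eigenvectorUnitary).2)

/-- Weyl's unitarian trick: for Hermitian `H` and `K` the commutation of `(H + x • K)^{⊗κ}` with `M`
is a polynomial identity in `x`; it holds for all real `x`, hence also for `x = I`. -/
theorem commute_tensorPow (hM : ∀ v ∈ unitaryGroup ι ℂ, Commute (tensorPow κ v) M)
    (B : Matrix ι ι ℂ) :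
    Commute (tensorPow κ B) M := by
  obtain ⟨H, K, hH, hK, rfl⟩ : ∃ H K : Matrix ι ι ℂ, H.IsHermitian ∧ K.IsHermitian ∧
      B = H + Complex.I • K :=
    ⟨_, _, (realPart B).2, (imaginaryPart B).2, (realPart_add_I_smul_imaginaryPart B).symm⟩
  let pencil : Matrix ι ι ℂ[X] := C.mapMatrix H + (X : ℂ[X]) • C.mapMatrix K
  have eval_pencil (z : ℂ) : (evalRingHom z).mapMatrix pencil = H + z • K := by
    ext i j
    simpa [pencil] using mul_comm (K i j) z
  have eval_C (z : ℂ) : (evalRingHom z).mapMatrix (C.mapMatrix M) = M := by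
    ext f g
    simp
  have commute_pencil : Commute (tensorPow κ pencil) (C.mapMatrix M) := by
    refine commute_of_infinite_commute_eval
      (Set.infinite_range_of_injective Complex.ofReal_injective) ?_
    rintro _ ⟨x, rfl⟩
    rw [map_tensorPow, eval_pencil, eval_C]
    refine commute_tensorPow_of_isHermitian hM (hH.add ?_)
    simp [IsHermitian, conjTranspose_smul, hK.eq]
  simpa only [map_tensorPow, eval_pencil, eval_C] using
    commute_pencil.map (evalRingHom Complex.I).mapMatrix

theorem tensorPow_sum_single_comp {R : Type*} [CommSemiring R] (e : κ ↪ ι) (f : κ → ι)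
    (τ : κ → κ) (h : κ → ι) :
    tensorPow κ (∑ k, single (e k) (f k) (1 : R)) (e ∘ τ) h = if h = f ∘ τ then 1 else 0 := by
  simp [tensorPow_apply, Matrix.sum_apply, single_apply, e.injective.eq_iff, ite_and,
    Finset.prod_ite_zero, funext_iff, eq_comm]

/-- The explicit form of Schur–Weyl duality. Row `f` of `M` is determined by row `e` because `M`
commutes with the tensor power of a matrix sending each basis index `e k` to `f k`. -/
theorem apply_eq_sum_perm_of_commute_tensorPow_unitary
    (hM : ∀ v ∈ unitaryGroup ι ℂ, Commute (tensorPow κ v) M) (e : κ ↪ ι) (f g : κ → ι) :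
    M f g = ∑ σ : Equiv.Perm κ, M e (e ∘ σ) * if g = f ∘ σ then 1 else 0 := by
  let B : Matrix ι ι ℂ := ∑ k, single (e k) (f k) 1
  have tensorPow_B (h : κ → ι) : tensorPow κ B e h = if h = f then 1 else 0 :=
    tensorPow_sum_single_comp e f id h
  have comp_injective : Function.Injective fun σ : Equiv.Perm κ => e ∘ σ :=
    e.injective.comp_left.comp DFunLike.coe_injective
  calc M f g = (tensorPow κ B * M) e g := by simp [mul_apply, tensorPow_B]
    _ = ∑ h, M e h * tensorPow κ B h g := by rw [(commute_tensorPow hM B).eq, mul_apply]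
    _ = ∑ σ : Equiv.Perm κ, M e (e ∘ σ) * tensorPow κ B (e ∘ σ) g := by
        refine (Fintype.sum_of_injective _ comp_injective _ _ (fun h hh => ?_) fun _ => rfl).symm
        by_contra hne
        obtain ⟨σ, rfl⟩ := exists_perm_of_commute_tensorPow_unitary hM (left_ne_zero_of_mul hne)
        exact hh ⟨σ, rfl⟩
    _ = ∑ σ : Equiv.Perm κ, M e (e ∘ σ) * if g = f ∘ σ then 1 else 0 := by
        simp only [B, tensorPow_sum_single_comp]

theorem mulVec_eq_sum_perm_of_commute_tensorPow_unitary
    (hM : ∀ v ∈ unitaryGroup ι ℂ, Commute (tensorPow κ v) M) (e : κ ↪ ι) (φ : (κ → ι) → ℂ)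
    (f : κ → ι) : (M *ᵥ φ) f = ∑ σ : Equiv.Perm κ, M e (e ∘ σ) * φ (f ∘ σ) := by
  simp only [mulVec, dotProduct, apply_eq_sum_perm_of_commute_tensorPow_unitary hM e f,
    Finset.sum_mul]
  rw [Finset.sum_comm]
  simp

end Commutant

section Twirl

instance unitaryGroup_compactSpace {ι 𝕜 : Type*} [Fintype ι] [DecidableEq ι] [RCLike 𝕜] :
    CompactSpace (unitaryGroup ι 𝕜) := by
  have hbox : IsCompact {B : Matrix ι ι 𝕜 | ∀ i j, B i j ∈ Metric.closedBall 0 1} :=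
    (isCompact_closedBall 0 1).matrix
  refine isCompact_iff_compactSpace.mp (hbox.of_isClosed_subset isClosed_unitary ?_)
  exact fun u hu i j => mem_closedBall_zero_iff.mpr (entry_norm_bound_of_unitary hu i j)

theorem integral_mul_mul_apply {Ω 𝕜 m : Type*} [MeasurableSpace Ω] {μ : Measure Ω} [RCLike 𝕜]
    [Fintype m] {F : Ω → Matrix m m 𝕜} (hF : ∀ i j, Integrable (fun ω => F ω i j) μ)
    (P Q : Matrix m m 𝕜) (i j : m) :
    ∫ ω, (P * F ω * Q) i j ∂μ = (P * (of fun i j => ∫ ω, F ω i j ∂μ) * Q) i j := by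
  have hPF (l : m) : Integrable (fun ω => ∑ k, P i k * F ω k l) μ :=
    integrable_finsetSum _ fun k _ => (hF k l).const_mul _
  simp only [mul_apply, of_apply]
  rw [integral_finsetSum _ fun l _ => (hPF l).mul_const _]
  refine Finset.sum_congr rfl fun l _ => ?_
  rw [integral_mul_const, integral_finsetSum _ fun k _ => (hF k l).const_mul _]
  simp only [integral_const_mul]

theorem commute_integral_conj {G 𝕜 m : Type*} [Group G] [MeasurableSpace G] [MeasurableMul G]
    {μ : Measure G} [μ.IsMulLeftInvariant] [RCLike 𝕜] [Fintype m] [DecidableEq m]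
    (ρ : G →* Matrix m m 𝕜) {B : Matrix m m 𝕜}
    (hB : ∀ i j, Integrable (fun u => (ρ u * B * ρ u⁻¹) i j) μ) (v : G) :
    Commute (ρ v) (of fun i j => ∫ u, (ρ u * B * ρ u⁻¹) i j ∂μ) := by
  set T : Matrix m m 𝕜 := of fun i j => ∫ u, (ρ u * B * ρ u⁻¹) i j ∂μ
  have hT : T = ρ v * T * ρ v⁻¹ := by
    ext i j
    calc T i j = ∫ u, (ρ (v * u) * B * ρ (v * u)⁻¹) i j ∂μ :=
          (integral_mul_left_eq_self (fun u => (ρ u * B * ρ u⁻¹) i j) v).symm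
      _ = ∫ u, (ρ v * (ρ u * B * ρ u⁻¹) * ρ v⁻¹) i j ∂μ := by
          simp only [_root_.mul_inv_rev, map_mul, Matrix.mul_assoc]
      _ = (ρ v * T * ρ v⁻¹) i j := integral_mul_mul_apply hB _ _ i j
  calc ρ v * T = ρ v * T * (ρ v⁻¹ * ρ v) := by rw [← map_mul, inv_mul_cancel, map_one, mul_one]
    _ = T * ρ v := by rw [← mul_assoc, ← hT]

variable {ι : Type*} [Fintype ι] [DecidableEq ι] [MeasurableSpace (unitaryGroup ι ℂ)]
  [BorelSpace (unitaryGroup ι ℂ)] (κ : Type*) [Fintype κ] [DecidableEq κ]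
  (μ : Measure (unitaryGroup ι ℂ))

/-- The twirl of `A^{⊗κ}`: the matrix of the operator `∫ (u A u*)^{⊗κ} dμ(u)`, integrated entry by
entry since `Matrix` carries no global norm. -/
noncomputable def tensorTwirl (A : Matrix ι ι ℂ) : Matrix (κ → ι) (κ → ι) ℂ :=
  of fun f g => ∫ u : unitaryGroup ι ℂ, tensorPow κ (u * A * star u : Matrix ι ι ℂ) f g ∂μ

theorem commute_tensorPow_tensorTwirl [μ.IsMulLeftInvariant] [IsFiniteMeasure μ]
    (A : Matrix ι ι ℂ) {v : Matrix ι ι ℂ} (hv : v ∈ unitaryGroup ι ℂ) :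
    Commute (tensorPow κ v) (tensorTwirl κ μ A) := by
  let ρ : unitaryGroup ι ℂ →* Matrix (κ → ι) (κ → ι) ℂ :=
    (tensorPow κ).comp (unitaryGroup ι ℂ).subtype
  have conj_eq (u : unitaryGroup ι ℂ) :
      tensorPow κ (u * A * star u : Matrix ι ι ℂ) = ρ u * tensorPow κ A * ρ u⁻¹ := by
    rw [map_mul, map_mul]
    rfl
  have integrable_conj (f g : κ → ι) :
      Integrable (fun u : unitaryGroup ι ℂ => (ρ u * tensorPow κ A * ρ u⁻¹) f g) μ := by
    simp only [← conj_eq, tensorPow_apply]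
    refine Continuous.integrable_of_hasCompactSupport ?_ (.of_compactSpace _)
    fun_prop
  simpa only [tensorTwirl, conj_eq] using! commute_integral_conj ρ integrable_conj ⟨v, hv⟩

end Twirl

theorem stmt13_general {ι κ : Type*} [Fintype ι] [DecidableEq ι] [Fintype κ] [DecidableEq κ]
    [MeasurableSpace (unitaryGroup ι ℂ)] [BorelSpace (unitaryGroup ι ℂ)] (e : κ ↪ ι)
    (μ : Measure (unitaryGroup ι ℂ)) [μ.IsMulLeftInvariant] [IsFiniteMeasure μ]
    (A : Matrix ι ι ℂ) (E : ((κ → ι) → ℂ) →ₗ[ℂ] ((κ → ι) → ℂ))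
    (hE : ∀ (φ : (κ → ι) → ℂ) (f : κ → ι), E φ f = ∑ g : κ → ι,
      (∫ u : unitaryGroup ι ℂ, ∏ k, (u * A * star u : Matrix ι ι ℂ) (f k) (g k) ∂μ) * φ g)
    (P : Equiv.Perm κ → (((κ → ι) → ℂ) →ₗ[ℂ] ((κ → ι) → ℂ)))
    (hP : ∀ (σ : Equiv.Perm κ) (φ : (κ → ι) → ℂ) (f : κ → ι), P σ φ f = φ (f ∘ σ))
    (V : Submodule ℂ ((κ → ι) → ℂ)) (hVinv : ∀ σ : Equiv.Perm κ, ∀ x ∈ V, P σ x ∈ V) :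
    (∀ x ∈ V, E x ∈ V) ∧
      ∀ (hEV : ∀ x ∈ V, E x ∈ V),
        LinearMap.trace ℂ V (E.restrict hEV) =
          ∑ σ : Equiv.Perm κ, LinearMap.trace ℂ V ((P σ).restrict (hVinv σ)) *
            ∫ u : unitaryGroup ι ℂ, ∏ k, (u * A * star u : Matrix ι ι ℂ) (e k) (e (σ k)) ∂μ := by
  have hM : ∀ v ∈ unitaryGroup ι ℂ, Commute (tensorPow κ v) (tensorTwirl κ μ A) :=
    fun v hv => commute_tensorPow_tensorTwirl κ μ A hv
  obtain rfl : E = ∑ σ : Equiv.Perm κ, tensorTwirl κ μ A e (e ∘ σ) • P σ := by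
    refine LinearMap.ext fun φ => funext fun f => (hE φ f).trans ?_
    refine (mulVec_eq_sum_perm_of_commute_tensorPow_unitary hM e φ f).trans ?_
    simp only [LinearMap.sum_apply, Finset.sum_apply, LinearMap.smul_apply, Pi.smul_apply,
      smul_eq_mul, hP]
  exact ⟨sum_smul_apply_mem hVinv _, trace_restrict_sum_smul hVinv _⟩

theorem stmt13 (n : ℕ) (hn : 1 ≤ n)
    (μ : Measure (Matrix.unitaryGroup (Fin n) ℂ))
    [μ.IsMulLeftInvariant] [IsProbabilityMeasure μ]
    (A : Matrix (Fin n) (Fin n) ℂ)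
    (E : ((Fin n → Fin n) → ℂ) →ₗ[ℂ] ((Fin n → Fin n) → ℂ))
    (hE : ∀ (φ : (Fin n → Fin n) → ℂ) (f : Fin n → Fin n),
      E φ f = ∑ g : Fin n → Fin n, (∫ u, ∏ k, (conjU A u) (f k) (g k) ∂μ) * φ g)
    (P : Equiv.Perm (Fin n) → (((Fin n → Fin n) → ℂ) →ₗ[ℂ] ((Fin n → Fin n) → ℂ)))
    (hP : ∀ (σ : Equiv.Perm (Fin n)) (φ : (Fin n → Fin n) → ℂ) (f : Fin n → Fin n),
      P σ φ f = φ (f ∘ σ))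
    (V : Submodule ℂ ((Fin n → Fin n) → ℂ))
    (hVinv : ∀ σ : Equiv.Perm (Fin n), ∀ x ∈ V, P σ x ∈ V) :
    (∀ x ∈ V, E x ∈ V) ∧
      ∀ (hEV : ∀ x ∈ V, E x ∈ V),
        LinearMap.trace ℂ V (E.restrict hEV) =
          ∑ σ : Equiv.Perm (Fin n),
            LinearMap.trace ℂ V ((P σ).restrict (hVinv σ)) *
              ∫ u, ∏ i, (conjU A u) i (σ i) ∂μ :=
  stmt13_general (.refl _) μ A E hE P hP V hVinv
end

section
/- Let n ≥ 1, let 1 ≤ m ≤ n, let A be an n×n complex matrix, and let σ and τ be permutations of {1,…,m}. Then ∫_{U(n)} ∏_{i=1}^m (u A u*)_{i, (τ σ τ⁻¹)(i)} du = ∫_{U(n)} ∏_{i=1}^m (u A u*)_{i, σ(i)} du; that is, the function I(A, σ) = ∫_{U(n)} ∏_{i=1}^m (u A u*)_{i, σ(i)} du is a class function of σ ∈ S_m. (Consequence of Theorem 9.) -/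
open MeasureTheory Matrix
open scoped ComplexOrder

/-!
Left translation by a permutation matrix preserves `μ` and simultaneously permutes the rows and
columns of `u * A * star u`. Hence the integral of a product of entries is unchanged when the row
and column indices are moved by a common permutation `ρ`. Taking `ρ` to extend `τ`, relabel
the factor `i` as `τ i`: the entry at `(i, τ σ τ⁻¹ i)` becomes the entry at `(τ i, τ σ i)`,
which is that at `(i, σ i)` moved by `ρ`.
-/

section PermutationInvariance

variable {n R : Type*} [Fintype n] [DecidableEq n] [CommRing R] [StarRing R]

theorem permMatrix_mem_unitaryGroup_s15 (ρ : Equiv.Perm n) :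
    ρ.permMatrix R ∈ unitaryGroup n R := by
  rw [mem_unitaryGroup_iff, star_eq_conjTranspose, conjTranspose_permMatrix, ← permMatrix_mul,
    inv_mul_cancel, permMatrix_one]

theorem permMatrix_mul_conj_eq_submatrix (ρ : Equiv.Perm n) (U A : Matrix n n R) :
    ρ.permMatrix R * U * A * star (ρ.permMatrix R * U) = (U * A * star U).submatrix ρ ρ := by
  have star_mul_eq : star (ρ.permMatrix R * U) = star U * ρ⁻¹.permMatrix R := by
    rw [star_mul, star_eq_conjTranspose (ρ.permMatrix R), conjTranspose_permMatrix]
  calc ρ.permMatrix R * U * A * star (ρ.permMatrix R * U)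
      = ρ.permMatrix R * (U * A * star U) * ρ⁻¹.permMatrix R := by
        simp only [star_mul_eq, Matrix.mul_assoc]
    _ = (U * A * star U).submatrix ρ ρ := by
        rw [PEquiv.toMatrix_toPEquiv_mul, PEquiv.mul_toMatrix_toPEquiv, submatrix_submatrix]
        rfl

variable [MeasurableSpace (unitaryGroup n R)] [MeasurableMul (unitaryGroup n R)]
  (μ : Measure (unitaryGroup n R)) [μ.IsMulLeftInvariant]

theorem integral_conj_submatrix_eq {E : Type*} [NormedAddCommGroup E] [NormedSpace ℝ E]
    (A : Matrix n n R) (ρ : Equiv.Perm n) (F : Matrix n n R → E) :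
    ∫ u : unitaryGroup n R, F ((u.1 * A * star u.1).submatrix ρ ρ) ∂μ =
      ∫ u : unitaryGroup n R, F (u.1 * A * star u.1) ∂μ := by
  let p : unitaryGroup n R := ⟨ρ.permMatrix R, permMatrix_mem_unitaryGroup_s15 ρ⟩
  simp only [← permMatrix_mul_conj_eq_submatrix]
  exact integral_mul_left_eq_self (fun u : unitaryGroup n R ↦ F (u.1 * A * star u.1)) p

end PermutationInvariance

theorem prod_apply_conj_eq_prod_submatrix {ι n R : Type*} [Fintype ι] [CommMonoid R]
    (M : Matrix n n R) (e : ι ↪ n) (σ : ι → ι) (τ : Equiv.Perm ι) :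
    ∏ i, M (e i) (e (τ (σ (τ⁻¹ i)))) =
      ∏ i, M.submatrix (τ.viaEmbedding e) (τ.viaEmbedding e) (e i) (e (σ i)) := by
  rw [← Equiv.prod_comp τ]
  simp only [submatrix_apply, Equiv.Perm.viaEmbedding_apply, ← Equiv.Perm.mul_apply,
    inv_mul_cancel, Equiv.Perm.one_apply]

theorem stmt15_general {ι n R : Type*} [Fintype ι] [Fintype n] [DecidableEq n]
    [NormedCommRing R] [StarRing R] [NormedSpace ℝ R]
    [MeasurableSpace (unitaryGroup n R)] [MeasurableMul (unitaryGroup n R)]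
    (μ : Measure (unitaryGroup n R)) [μ.IsMulLeftInvariant]
    (A : Matrix n n R) (e : ι ↪ n) (σ : ι → ι) (τ : Equiv.Perm ι) :
    ∫ u : unitaryGroup n R, ∏ i, (u.1 * A * star u.1) (e i) (e (τ (σ (τ⁻¹ i)))) ∂μ =
      ∫ u : unitaryGroup n R, ∏ i, (u.1 * A * star u.1) (e i) (e (σ i)) ∂μ := by
  simp only [prod_apply_conj_eq_prod_submatrix]
  exact integral_conj_submatrix_eq μ A (τ.viaEmbedding e) fun M ↦ ∏ i, M (e i) (e (σ i))

theorem stmt15 (n m : ℕ) (hm1 : 1 ≤ m) (hmn : m ≤ n)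
    (μ : Measure (Matrix.unitaryGroup (Fin n) ℂ))
    [μ.IsMulLeftInvariant] [IsProbabilityMeasure μ]
    (A : Matrix (Fin n) (Fin n) ℂ) (σ τ : Equiv.Perm (Fin m)) :
    ∫ u, ∏ i : Fin m, (conjU A u) (Fin.castLE hmn i) (Fin.castLE hmn ((τ * σ * τ⁻¹) i)) ∂μ =
      ∫ u, ∏ i : Fin m, (conjU A u) (Fin.castLE hmn i) (Fin.castLE hmn (σ i)) ∂μ :=
  stmt15_general μ A (Fin.castLEEmb hmn) σ τ
end
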